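/- Let A be an associative, graded commutative, unital K-algebra, P and Q projective and finitely generated graded A-modules, and ψ : Sym_A(Q,A) → Sym_A(P,A) a degree 0 morphism of graded unital algebras with p∘ψ = p, with associated maps φ_k : P^k × A → A and Φ_k : P^k → Q. Then for every ω ∈ Sym_A^r(Q,A) and p_1,…,p_k ∈ P, the Sym_A^k(P,A)-component of ψ(ω) is given by ψ(ω)_k(p_1,…,p_k) = Σ_{ℓ_0+⋯+ℓ_r=k, ℓ_1≤⋯≤ℓ_r} Σ_{σ∈T_{ℓ_0|ℓ_1,…,ℓ_r}} (−1)^{ω(p_{σ(1)}+⋯+p_{σ(ℓ_0)})} α(σ,p) φ_{ℓ_0}(p_{σ(1)},…,p_{σ(ℓ_0)} | ω(Φ_{1,σ}(p),…,Φ_{r,σ}(p))), where Φ_{i,σ}(p) := Φ_{ℓ_i}(p_{σ(ℓ_0+ℓ_1+⋯+ℓ_{i−1}+1)},…,p_{σ(ℓ_0+ℓ_1+⋯+ℓ_i)}) and T_{ℓ_0|ℓ_1,…,ℓ_r} is the set of permutations of {1,…,k} increasing on each block of lengths ℓ_1,…,ℓ_r and with increasing first elements on blocks of equal length (for i > 0).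 -/

import Mathlib

/-! The component formula is proved by rewriting all sums over permutations as sums over subsets of
the index set of `p`, and by checking that the resulting formula is stable under multiplication by
algebra generators of `Sym_A(Q,A)`.

An unshuffle is the same as a subset `U`, and its Koszul sign is the product `crossSign U Uᶜ` of the
signs of the pairs out of order. In these terms the shuffle product reads
`(x * y)(p_T) = ∑_{U ⊆ T} ± x(p_U) y(p_{T \ U})` (`evOn_mul_homTot`), and the defining relation of
`Φ`, solved for `ψ(x)` with `x` a one-form, reads
`ψ(x)(p_T) = ∑_{∅ ≠ C ⊆ T} ± ψ(x(Φ(p_C)))(p_{T \ C})` (`psi_one_form`).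
Likewise, the permutations in `T_{ℓ0|ℓ1,…,ℓr}`, with `1 ≤ ℓ1 ≤ ⋯ ≤ ℓr`, correspond to families
`B` of `r` nonempty disjoint subsets, sorted by cardinality and then by first element, that is, to
unordered collections of `r` blocks (`sum_blockPerms`); the initial block of length `ℓ0` is the
complement of the union of `B`.

The formula to be proved then becomes `PsiFormula`: `ψ(x)(p_T)` is the signed sum, over
unordered collections `B` of `r` blocks in `T`, of `ψ(x(Φ(p_{B 1}),…,Φ(p_{B r})))` evaluated on the
entries outside of `B`. Stability under `x ↦ a x`, `a ∈ A`, follows from the multiplicativity of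
`ψ` (`PsiFormula.incA_mul`). For a one-form `x` and `y` of arity `r`, the value of `x * y` on
`r + 1` arguments is a sum over the argument given to `x`, and an unordered collection of `r + 1`
blocks with one of them singled out is a block `C` together with an unordered collection of `r`
blocks disjoint from `C` (`sum_goodFams_succ`); comparing with the relation above for `ψ(x)` gives
`PsiFormula.one_form_mul`. As `A` and the one-forms generate `Sym_A(Q,A)`, every element is a
combination of bihomogeneous ones satisfying the formula (`formulaSpan_eq_top`), and projecting to
a bihomogeneous component gives the claim. -/

noncomputable section

open scoped BigOperators

/-- The sign `(-1)^n`, `n : ℤ`. -/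
def ksign (K : Type*) [Ring K] (n : ℤ) : K := if Even n then 1 else -1

/-- Total-function access to a finite tuple (junk value `0` out of range). -/
def fget {α : Type*} [Zero α] {k : ℕ} (q : Fin k → α) (m : ℕ) : α :=
  if h : m < k then q ⟨m, h⟩ else 0

/-- A permutation of `Fin k` viewed as a function on `ℕ` (identity out of range). -/
def pidx {k : ℕ} (σ : Equiv.Perm (Fin k)) (m : ℕ) : ℕ :=
  if h : m < k then ((σ ⟨m, h⟩ : Fin k) : ℕ) else m

/-- The Koszul sign `α(σ, v)` of a permutation with respect to degrees `d`, defined as the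
product over the inversions of `σ` of the signs `(-1)^(dᵢ·dⱼ)`. -/
def koszulSign (K : Type*) [CommRing K] {n : ℕ} (d : Fin n → ℤ) (σ : Equiv.Perm (Fin n)) : K :=
  ∏ p ∈ Finset.univ.filter (fun p : Fin n × Fin n => p.1 < p.2 ∧ σ.symm p.2 < σ.symm p.1),
    ksign K (d p.1 * d p.2)

/-- The set `S_{i,n-i}` of `(i, n-i)`-unshuffles. -/
def unshuffles (n i : ℕ) : Finset (Equiv.Perm (Fin n)) :=
  Finset.univ.filter fun σ => ∀ a b : Fin n, a < b →
    (((b : ℕ) < i) ∨ (i ≤ (a : ℕ))) → σ a < σ b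

/-- Offset of the `i`-th block in a composition `(ℓ₀; c)`. -/
def blockOff {r : ℕ} (ℓ0 : ℕ) (c : Fin r → ℕ) (i : Fin r) : ℕ :=
  ℓ0 + ∑ j ∈ Finset.univ.filter (fun j => j < i), c j

/-- The set `T_{ℓ₀|ℓ₁,…,ℓᵣ}` of permutations of `{1,…,k}` increasing on each block,
with increasing first elements on blocks of equal length. -/
def Tset (k ℓ0 : ℕ) {r : ℕ} (c : Fin r → ℕ) : Finset (Equiv.Perm (Fin k)) :=
  Finset.univ.filter fun σ =>
    (∀ a b : Fin k, (a : ℕ) < b → (b : ℕ) < ℓ0 → pidx σ a < pidx σ b) ∧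
    (∀ i : Fin r, ∀ a b : Fin k, (a : ℕ) < b → (b : ℕ) < c i →
      pidx σ (blockOff ℓ0 c i + a) < pidx σ (blockOff ℓ0 c i + b)) ∧
    (∀ i j : Fin r, i < j → c i = c j →
      pidx σ (blockOff ℓ0 c i) < pidx σ (blockOff ℓ0 c j))

/-- Graded commutative (unital, associative) algebra: internal ℤ-grading with the Koszul
sign rule. -/
structure IsGCAlg (K : Type*) [Field K] (A : Type*) [Ring A] [Algebra K A]
    (degA : ℤ → Submodule K A) : Prop where
  one_mem : (1 : A) ∈ degA 0
  mul_mem : ∀ {i j : ℤ} {a b : A}, a ∈ degA i → b ∈ degA j → a * b ∈ degA (i + j)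
  gcomm : ∀ {i j : ℤ} {a b : A}, a ∈ degA i → b ∈ degA j → a * b = ksign K (i * j) • (b * a)

/-- Graded module over a graded algebra. -/
structure IsGMod (K : Type*) [Field K] (A : Type*) [Ring A] [Algebra K A]
    (Q : Type*) [AddCommGroup Q] [Module K Q] [Module A Q]
    (degA : ℤ → Submodule K A) (degQ : ℤ → Submodule K Q) : Prop where
  smul_mem : ∀ {i j : ℤ} {a : A} {q : Q}, a ∈ degA i → q ∈ degQ j → a • q ∈ degQ (i + j)

/-- The `k`-th Jacobiator of a family of graded symmetric degree 1 brackets. -/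
def bracketJacobiator (K : Type*) [Field K] (Q : Type*) [AddCommGroup Q] [Module K Q]
    (br : ∀ k : ℕ, (Fin k → Q) → Q) (k : ℕ) (d : Fin k → ℤ) (q : Fin k → Q) : Q :=
  ∑ i ∈ Finset.Icc 1 k, ∑ σ ∈ unshuffles k i, koszulSign K d σ •
    br (k - i + 1) (Fin.cons (br i fun s : Fin i => fget q (pidx σ (s : ℕ)))
      fun t : Fin (k - i) => fget q (pidx σ (i + (t : ℕ))))

/-- The `(k+1)`-st Jacobiator of the anchors of an `LR∞[1]`-algebra (the Jacobiator of the
`L∞[1]`-module structure of `A` over `Q`, computed via the `⊕`-extended brackets on `Q ⊕ A`,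
with the module entry `a` in the last slot). -/
def anchorJacobiator (K : Type*) [Field K] (A : Type*) [AddCommGroup A] [Module K A]
    (Q : Type*) [AddCommGroup Q] [Module K Q]
    (br : ∀ k : ℕ, (Fin k → Q) → Q) (an : ∀ k : ℕ, (Fin k → Q) → A → A)
    (k : ℕ) (d : Fin k → ℤ) (q : Fin k → Q) (da : ℤ) (a : A) : A :=
  (∑ i ∈ Finset.Icc 1 (k+1), ∑ σ ∈ unshuffles (k+1) i,
    if pidx σ (i-1) = k then
      (koszulSign K (Fin.snoc d da : Fin (k+1) → ℤ) σ *
        ksign K (((∑ s ∈ Finset.range (i-1), fget d (pidx σ s)) + da + 1) *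
          (∑ t ∈ Finset.range (k+1-i), fget d (pidx σ (i+t))))) •
      an (k+1-i) (fun t : Fin (k+1-i) => fget q (pidx σ (i+(t:ℕ))))
        (an (i-1) (fun s : Fin (i-1) => fget q (pidx σ (s:ℕ))) a)
    else 0) +
  (∑ i ∈ Finset.Icc 1 k, ∑ σ ∈ unshuffles (k+1) i,
    if pidx σ k = k then
      koszulSign K (Fin.snoc d da : Fin (k+1) → ℤ) σ •
      an (k-i+1) (Fin.cons (br i fun s : Fin i => fget q (pidx σ (s:ℕ)))
          fun t : Fin (k-i) => fget q (pidx σ (i+(t:ℕ)))) a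
    else 0)

/-- An `LR∞[1]`-algebra structure on the pair `(A, Q)`:  graded symmetric, `K`-multilinear,
degree 1 brackets `{·,…,·}ₖ` on `Q` with vanishing Jacobiators, anchors
`{·,…,·|·}ₖ : Qᵏ⁻¹ × A → A` (graded symmetric and `A`-multilinear in the `Q`-entries, graded
derivations of `A` in the last entry) with vanishing Jacobiators, satisfying the homotopy
Lie-Rinehart identity. -/
structure LRinfty (K : Type*) [Field K] (A : Type*) [Ring A] [Algebra K A]
    (Q : Type*) [AddCommGroup Q] [Module K Q] [Module A Q] [IsScalarTower K A Q]
    (degA : ℤ → Submodule K A) (degQ : ℤ → Submodule K Q) where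
  br : ∀ k : ℕ, (Fin k → Q) → Q
  an : ∀ k : ℕ, (Fin k → Q) → A → A
  br_update_add : ∀ (k : ℕ) (q : Fin k → Q) (i : Fin k) (x y : Q),
    br k (Function.update q i (x + y)) =
      br k (Function.update q i x) + br k (Function.update q i y)
  br_update_smul : ∀ (k : ℕ) (q : Fin k → Q) (i : Fin k) (c : K) (x : Q),
    br k (Function.update q i (c • x)) = c • br k (Function.update q i x)
  br_mem : ∀ (k : ℕ) (d : Fin k → ℤ) (q : Fin k → Q), (∀ i, q i ∈ degQ (d i)) →
    br k q ∈ degQ ((∑ i, d i) + 1)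
  br_perm : ∀ (k : ℕ) (d : Fin k → ℤ) (q : Fin k → Q), (∀ i, q i ∈ degQ (d i)) →
    ∀ σ : Equiv.Perm (Fin k), br k (q ∘ σ) = koszulSign K d σ • br k q
  an_update_add : ∀ (k : ℕ) (q : Fin k → Q) (i : Fin k) (x y : Q) (a : A),
    an k (Function.update q i (x + y)) a =
      an k (Function.update q i x) a + an k (Function.update q i y) a
  an_update_smul : ∀ (k : ℕ) (q : Fin k → Q) (i : Fin k) (c : K) (x : Q) (a : A),
    an k (Function.update q i (c • x)) a = c • an k (Function.update q i x) a
  an_add : ∀ (k : ℕ) (q : Fin k → Q) (a b : A), an k q (a + b) = an k q a + an k q b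
  an_smul : ∀ (k : ℕ) (q : Fin k → Q) (c : K) (a : A), an k q (c • a) = c • an k q a
  an_mem : ∀ (k : ℕ) (d : Fin k → ℤ) (q : Fin k → Q), (∀ i, q i ∈ degQ (d i)) →
    ∀ {da : ℤ} {a : A}, a ∈ degA da → an k q a ∈ degA ((∑ i, d i) + 1 + da)
  an_perm : ∀ (k : ℕ) (d : Fin k → ℤ) (q : Fin k → Q), (∀ i, q i ∈ degQ (d i)) →
    ∀ (σ : Equiv.Perm (Fin k)) (a : A), an k (q ∘ σ) a = koszulSign K d σ • an k q a
  an_leibniz : ∀ (k : ℕ) (d : Fin k → ℤ) (q : Fin k → Q), (∀ i, q i ∈ degQ (d i)) →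
    ∀ {ia : ℤ} (a b : A), a ∈ degA ia →
      an k q (a * b) = an k q a * b + ksign K (((∑ i, d i) + 1) * ia) • (a * an k q b)
  an_A_linear : ∀ (k : ℕ) (d : Fin k → ℤ) (q : Fin k → Q), (∀ i, q i ∈ degQ (d i)) →
    ∀ {ic : ℤ} (c : A), c ∈ degA ic → ∀ (i : Fin k) (a : A),
      an k (Function.update q i (c • q i)) a =
        ksign K (ic * (1 + ∑ j ∈ Finset.univ.filter (fun j => j < i), d j)) •
          (c * an k q a)
  lie_rinehart : ∀ (m : ℕ) (d : Fin (m+1) → ℤ) (q : Fin (m+1) → Q),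
    (∀ i, q i ∈ degQ (d i)) → ∀ {ia : ℤ} (a : A), a ∈ degA ia →
      br (m+1) (Function.update q (Fin.last m) (a • q (Fin.last m))) =
        an m (fun j : Fin m => q j.castSucc) a • q (Fin.last m) +
          ksign K (ia * ((∑ j : Fin m, d j.castSucc) + 1)) • (a • br (m+1) q)
  jac_br : ∀ (k : ℕ) (d : Fin k → ℤ) (q : Fin k → Q), (∀ i, q i ∈ degQ (d i)) →
    bracketJacobiator K Q br k d q = 0
  jac_an : ∀ (k : ℕ) (d : Fin k → ℤ) (q : Fin k → Q), (∀ i, q i ∈ degQ (d i)) →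
    ∀ {da : ℤ} {a : A}, a ∈ degA da → anchorJacobiator K A Q br an k d q da a = 0
/-- The predicate characterising the homogeneous elements of `Sym_A^r(Q,A)` of bidegree
`(r,s)`: graded, graded symmetric, `A`-multilinear maps `Q^r → A`, homogeneous of total
degree `r + s`. -/
def IsSymForm (K : Type*) [Field K] (A : Type*) [Ring A] [Algebra K A]
    (Q : Type*) [AddCommGroup Q] [Module K Q] [Module A Q]
    (degA : ℤ → Submodule K A) (degQ : ℤ → Submodule K Q)
    (r : ℕ) (s : ℤ) (f : (Fin r → Q) → A) : Prop :=
  (∀ (q : Fin r → Q) (i : Fin r) (x y : Q),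
      f (Function.update q i (x + y)) = f (Function.update q i x) + f (Function.update q i y)) ∧
  (∀ (q : Fin r → Q) (i : Fin r) (c : K) (x : Q),
      f (Function.update q i (c • x)) = c • f (Function.update q i x)) ∧
  (∀ (d : Fin r → ℤ) (q : Fin r → Q), (∀ i, q i ∈ degQ (d i)) →
      f q ∈ degA ((∑ i, d i) + ((r : ℤ) + s))) ∧
  (∀ (d : Fin r → ℤ) (q : Fin r → Q), (∀ i, q i ∈ degQ (d i)) →
      ∀ σ : Equiv.Perm (Fin r), f (q ∘ σ) = koszulSign K d σ • f q) ∧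
  (∀ (d : Fin r → ℤ) (q : Fin r → Q), (∀ i, q i ∈ degQ (d i)) →
      ∀ {ia : ℤ} (a : A), a ∈ degA ia → ∀ hr : 0 < r,
      f (Function.update q ⟨0, hr⟩ (a • q ⟨0, hr⟩)) = ksign K (ia * ((r : ℤ) + s)) • (a * f q))

/-- A model of the bigraded, associative, graded commutative, unital algebra
`Sym_A(Q, A) = ⊕ᵣ Sym_A^r(Q,A)` of graded, graded symmetric, `A`-multilinear maps `Q^r → A`,
with the shuffle product, together with its bihomogeneous projections. -/
structure SymModel (K : Type*) [Field K] (A : Type*) [Ring A] [Algebra K A]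
    (Q : Type*) [AddCommGroup Q] [Module K Q] [Module A Q] [IsScalarTower K A Q]
    (degA : ℤ → Submodule K A) (degQ : ℤ → Submodule K Q) where
  𝒜 : Type*
  [ring𝒜 : Ring 𝒜]
  [alg𝒜 : Algebra K 𝒜]
  /-- the bihomogeneous components `Sym_A^r(Q,A)^s` -/
  comp : ℕ → ℤ → Submodule K 𝒜
  /-- evaluation of the `Sym^r`-component of an element on an `r`-tuple of elements of `Q` -/
  ev : ∀ r : ℕ, 𝒜 → (Fin r → Q) → A
  /-- the embedding of `A = Sym_A^0(Q,A)` -/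
  incA : A →ₐ[K] 𝒜
  /-- the projection onto the bihomogeneous component of bidegree `(r,s)` -/
  proj : ℕ → ℤ → 𝒜 → 𝒜
  ev_add : ∀ (r : ℕ) (x y : 𝒜) (q : Fin r → Q), ev r (x + y) q = ev r x q + ev r y q
  ev_smul : ∀ (r : ℕ) (c : K) (x : 𝒜) (q : Fin r → Q), ev r (c • x) q = c • ev r x q
  ev_ne : ∀ {r : ℕ} {s : ℤ} {x : 𝒜}, x ∈ comp r s → ∀ r' : ℕ, r' ≠ r →
    ∀ q : Fin r' → Q, ev r' x q = 0
  ev_symform : ∀ {r : ℕ} {s : ℤ} {x : 𝒜}, x ∈ comp r s →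
    IsSymForm K A Q degA degQ r s (ev r x)
  ev_incA : ∀ (a : A) (q : Fin 0 → Q), ev 0 (incA a) q = a
  incA_mem : ∀ {s : ℤ} {a : A}, a ∈ degA s → incA a ∈ comp 0 s
  mul_mem : ∀ {r : ℕ} {s : ℤ} {r' : ℕ} {s' : ℤ} {x y : 𝒜}, x ∈ comp r s → y ∈ comp r' s' →
    x * y ∈ comp (r + r') (s + s')
  /-- the shuffle product formula -/
  ev_mul : ∀ {r : ℕ} {s : ℤ} {r' : ℕ} {s' : ℤ} {x y : 𝒜}, x ∈ comp r s → y ∈ comp r' s' →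
    ∀ (d : Fin (r + r') → ℤ) (q : Fin (r + r') → Q), (∀ i, q i ∈ degQ (d i)) →
      ev (r + r') (x * y) q = ∑ σ ∈ unshuffles (r + r') r,
        (koszulSign K d σ * ksign K (((r' : ℤ) + s') * ∑ u ∈ Finset.range r, fget d (pidx σ u))) •
          (ev r x (fun u : Fin r => fget q (pidx σ (u : ℕ))) *
            ev r' y (fun t : Fin r' => fget q (pidx σ (r + (t : ℕ)))))
  ev_faithful : ∀ {r : ℕ} {s : ℤ} {x : 𝒜}, x ∈ comp r s →
    (∀ q : Fin r → Q, ev r x q = 0) → x = 0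
  ev_full : ∀ (r : ℕ) (s : ℤ) (f : (Fin r → Q) → A), IsSymForm K A Q degA degQ r s f →
    ∃ x ∈ comp r s, ev r x = f
  proj_add : ∀ (r : ℕ) (s : ℤ) (x y : 𝒜), proj r s (x + y) = proj r s x + proj r s y
  proj_smul : ∀ (r : ℕ) (s : ℤ) (c : K) (x : 𝒜), proj r s (c • x) = c • proj r s x
  proj_mem : ∀ (r : ℕ) (s : ℤ) (x : 𝒜), proj r s x ∈ comp r s
  proj_eq : ∀ {r : ℕ} {s : ℤ} {x : 𝒜}, x ∈ comp r s → proj r s x = x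
  proj_ne : ∀ {r : ℕ} {s : ℤ} {x : 𝒜}, x ∈ comp r s → ∀ (r' : ℕ) (s' : ℤ),
    (r', s') ≠ (r, s) → proj r' s' x = 0
  proj_decomp : ∀ x : 𝒜, ∃ F : Finset (ℕ × ℤ), x = ∑ p ∈ F, proj p.1 p.2 x
  /-- `Sym_A(Q,A)` is generated, as an algebra, by `A` and `Q* = Sym_A^1(Q,A)` -/
  gen : Algebra.adjoin K ((Set.range incA) ∪ ⋃ s : ℤ, ((comp 1 s : Submodule K 𝒜) : Set 𝒜)) = ⊤

attribute [instance] SymModel.ring𝒜 SymModel.alg𝒜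

/-- A multi-differential algebra structure `{d_k}` on a model of `Sym_A(Q,A)`: a family of
graded derivations `d_k` of bidegree `(k, -k+1)` with `∑_{i+j=k} [d_i, d_j] = 0` for all `k`. -/
structure MultiDiffOn {K : Type*} [Field K] {A : Type*} [Ring A] [Algebra K A]
    {Q : Type*} [AddCommGroup Q] [Module K Q] [Module A Q] [IsScalarTower K A Q]
    {degA : ℤ → Submodule K A} {degQ : ℤ → Submodule K Q}
    (S : SymModel K A Q degA degQ) where
  d : ℕ → S.𝒜 → S.𝒜
  d_add : ∀ (k : ℕ) (x y : S.𝒜), d k (x + y) = d k x + d k y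
  d_smul : ∀ (k : ℕ) (c : K) (x : S.𝒜), d k (c • x) = c • d k x
  d_mem : ∀ (k : ℕ) {r : ℕ} {s : ℤ} {x : S.𝒜}, x ∈ S.comp r s → d k x ∈ S.comp (r + k) (s - k + 1)
  d_leibniz : ∀ (k : ℕ) {r : ℕ} {s : ℤ} {x : S.𝒜}, x ∈ S.comp r s → ∀ y : S.𝒜,
    d k (x * y) = d k x * y + ksign K ((r : ℤ) + s) • (x * d k y)
  sq_zero : ∀ (k : ℕ) (x : S.𝒜),
    ∑ i ∈ Finset.range (k + 1), (d i (d (k - i) x) + d (k - i) (d i x)) = 0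

/-- The compatibility relation between an `LR∞[1]`-algebra structure on `(A,Q)` and a
multi-differential algebra structure on `Sym_A(Q,A)`: the derivations `d_k` are determined on
the generators `a ∈ A` and `ω ∈ Q* = Hom_A(Q,A)` by the anchors and brackets via
`(d_k a)(q_1,…,q_k) = (-1)^{a(q_1+⋯+q_k)} {q_1,…,q_k | a}` and
`(d_k ω)(q_1,…,q_{k+1}) = ∑ᵢ (-1)^{χᵢ} {q_1,…,q̂ᵢ,…,q_{k+1} | ω(qᵢ)} + (-1)^ω ω({q_1,…,q_{k+1}})`. -/
def GenCompat {K : Type*} [Field K] {A : Type*} [Ring A] [Algebra K A]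
    {Q : Type*} [AddCommGroup Q] [Module K Q] [Module A Q] [IsScalarTower K A Q]
    {degA : ℤ → Submodule K A} {degQ : ℤ → Submodule K Q}
    (S : SymModel K A Q degA degQ) (L : LRinfty K A Q degA degQ)
    (D : MultiDiffOn S) : Prop :=
  (∀ (k : ℕ) {sa : ℤ} (a : A), a ∈ degA sa →
    ∀ (d : Fin k → ℤ) (q : Fin k → Q), (∀ i, q i ∈ degQ (d i)) →
      S.ev k (D.d k (S.incA a)) q = ksign K (sa * ∑ i, d i) • L.an k q a) ∧
  (∀ (k : ℕ) {s : ℤ} (x : S.𝒜), x ∈ S.comp 1 s →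
    ∀ (d : Fin (k+1) → ℤ) (q : Fin (k+1) → Q), (∀ i, q i ∈ degQ (d i)) →
      S.ev (k+1) (D.d k x) q =
        (∑ i : Fin (k+1),
          ksign K ((1 + s) * (∑ j : Fin k, d (i.succAbove j)) +
              d i * (∑ j ∈ Finset.univ.filter (fun j => i < j), d j)) •
            L.an k (fun j : Fin k => q (i.succAbove j)) (S.ev 1 x (fun _ => q i))) +
        ksign K (1 + s) • S.ev 1 x (fun _ => L.br (k+1) q))
/-- The obstructions `K_f^k` for a family `f = {f_k}` of graded symmetric degree 0 maps to be a
morphism of `L∞[1]`-algebras. -/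
def Kobstruction (K : Type*) [Field K] (P : Type*) [AddCommGroup P] [Module K P]
    (Q : Type*) [AddCommGroup Q] [Module K Q]
    (brP : ∀ k : ℕ, (Fin k → P) → P) (brQ : ∀ k : ℕ, (Fin k → Q) → Q)
    (f : ∀ k : ℕ, (Fin k → P) → Q) (k : ℕ) (d : Fin k → ℤ) (p : Fin k → P) : Q :=
  (∑ i ∈ Finset.Icc 1 k, ∑ σ ∈ unshuffles k i, koszulSign K d σ •
     f (k - i + 1) (Fin.cons (brP i fun u : Fin i => fget p (pidx σ (u : ℕ)))
       fun t : Fin (k - i) => fget p (pidx σ (i + (t : ℕ)))))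
  - ∑ ℓ ∈ Finset.Icc 1 k,
      ∑ c ∈ (Fintype.piFinset fun _ : Fin ℓ => Finset.range (k+1)).filter
        (fun c => (∑ i, c i) = k ∧ (∀ i j : Fin ℓ, i ≤ j → c i ≤ c j) ∧ ∀ i, 0 < c i),
      ∑ σ ∈ Tset k 0 c, koszulSign K d σ •
        brQ ℓ (fun i : Fin ℓ =>
          f (c i) (fun u : Fin (c i) => fget p (pidx σ (blockOff 0 c i + (u : ℕ)))))

section Morphisms

variable {K : Type*} [Field K] {A : Type*} [Ring A] [Algebra K A]
variable {P : Type*} [AddCommGroup P] [Module K P] [Module A P] [IsScalarTower K A P]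
variable {Q : Type*} [AddCommGroup Q] [Module K Q] [Module A Q] [IsScalarTower K A Q]
variable {degA : ℤ → Submodule K A} {degP : ℤ → Submodule K P} {degQ : ℤ → Submodule K Q}

/-- The maps `φ_k : P^k × A → A` determined by a degree 0 unital algebra morphism
`ψ : Sym_A(Q,A) → Sym_A(P,A)`: `φ_k(p_1,…,p_k|a) := (-1)^{a(p_1+⋯+p_k)} ψ_k(a)(p_1,…,p_k)`,
where `ψ_k(a)` is the `Sym^k`-component of `ψ(a)`.  Here `sa` is the degree of `a` and `dpsum`
the total degree of `(p_1,…,p_k)`. -/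
def phiMap (SQ : SymModel K A Q degA degQ) (SP : SymModel K A P degA degP)
    (ψ : SQ.𝒜 →ₐ[K] SP.𝒜) (j : ℕ) (sa : ℤ) (a : A) (dpsum : ℤ) (pp : Fin j → P) : A :=
  ksign K (sa * dpsum) • SP.ev j (SP.proj j (sa - j) (ψ (SQ.incA a))) pp

/-- The family `Φ = {Φ_k : P^k → Q}` determined by `ψ` via the inductive implicit formula
`ω(Φ_k(p_1,…,p_k)) = Ψ_k(ω)(p_1,…,p_k) − ∑_{i+j=k, j>0} ∑_{σ∈S_{i,j}} α(σ,p)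
ψ_j(ω(Φ_i(p_{σ(1)},…,p_{σ(i)})))(p_{σ(i+1)},…,p_{σ(i+j)})`, for `ω ∈ Hom_A(Q,A)`;
the family is moreover multilinear, graded symmetric and of degree `0`. -/
def PhiDetermined (SQ : SymModel K A Q degA degQ) (SP : SymModel K A P degA degP)
    (ψ : SQ.𝒜 →ₐ[K] SP.𝒜) (Φ : ∀ k : ℕ, (Fin k → P) → Q) : Prop :=
  (∀ (k : ℕ) (dp : Fin k → ℤ) (p : Fin k → P), (∀ i, p i ∈ degP (dp i)) →
    Φ k p ∈ degQ (∑ i, dp i)) ∧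
  (∀ (k : ℕ) (dp : Fin k → ℤ) (p : Fin k → P), (∀ i, p i ∈ degP (dp i)) →
    ∀ σ : Equiv.Perm (Fin k), Φ k (p ∘ σ) = koszulSign K dp σ • Φ k p) ∧
  (∀ (k : ℕ) (p : Fin k → P) (i : Fin k) (x y : P),
    Φ k (Function.update p i (x + y)) = Φ k (Function.update p i x) + Φ k (Function.update p i y)) ∧
  (∀ (k : ℕ) {s : ℤ} (x : SQ.𝒜), x ∈ SQ.comp 1 s →
    ∀ (dp : Fin k → ℤ) (p : Fin k → P), (∀ i, p i ∈ degP (dp i)) →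
      SQ.ev 1 x (fun _ => Φ k p) =
        SP.ev k (SP.proj k (1 + s - k) (ψ x)) p -
        ∑ i ∈ Finset.Icc 1 (k - 1), ∑ σ ∈ unshuffles k i, koszulSign K dp σ •
          SP.ev (k - i)
            (SP.proj (k - i) ((∑ u ∈ Finset.range i, fget dp (pidx σ u)) + 1 + s - (k - i))
              (ψ (SQ.incA (SQ.ev 1 x
                (fun _ => Φ i (fun u : Fin i => fget p (pidx σ (u : ℕ))))))))
            (fun t : Fin (k - i) => fget p (pidx σ (i + (t : ℕ)))))

end Morphisms

/-! ### Koszul signs of families of subsets -/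

section Signs

variable (K : Type*) [Field K]

lemma ksign_zero : ksign K 0 = 1 := by simp [ksign]

lemma ksign_add (a b : ℤ) : ksign K (a + b) = ksign K a * ksign K b := by
  unfold ksign
  by_cases ha : Even a <;> by_cases hb : Even b <;> simp [Int.even_add, ha, hb]

lemma ksign_mul_self (a : ℤ) : ksign K a * ksign K a = 1 := by
  unfold ksign
  split_ifs <;> simp

lemma ksign_sum {ι : Type*} (s : Finset ι) (f : ι → ℤ) :
    ksign K (∑ i ∈ s, f i) = ∏ i ∈ s, ksign K (f i) := by
  classical
  induction s using Finset.induction_on with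
  | empty => simp [ksign_zero]
  | insert a s ha ih => rw [Finset.sum_insert ha, Finset.prod_insert ha, ksign_add, ih]

/-- The sign contributed by the pair `(i, j)` when the entry `i` is moved in front of the
entry `j`: it is trivial unless `j < i`. -/
def pairSign {n : ℕ} (d : Fin n → ℤ) (i j : Fin n) : K :=
  if j < i then ksign K (d i * d j) else 1

/-- The Koszul sign of rearranging the entries indexed by the disjoint union of `S` and `T` into
the entries of `S` (in increasing order) followed by those of `T`. -/
def crossSign {n : ℕ} (d : Fin n → ℤ) (S T : Finset (Fin n)) : K :=
  ∏ i ∈ S, ∏ j ∈ T, pairSign K d i j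

/-- The total degree of the entries indexed by `S`. -/
def degOn {n : ℕ} (d : Fin n → ℤ) (S : Finset (Fin n)) : ℤ := ∑ i ∈ S, d i

variable {n : ℕ} (d : Fin n → ℤ)

lemma degOn_union {S T : Finset (Fin n)} (h : Disjoint S T) :
    degOn d (S ∪ T) = degOn d S + degOn d T := Finset.sum_union h

lemma crossSign_union_left {S S' : Finset (Fin n)} (h : Disjoint S S') (T : Finset (Fin n)) :
    crossSign K d (S ∪ S') T = crossSign K d S T * crossSign K d S' T := by
  unfold crossSign
  rw [Finset.prod_union h]

lemma crossSign_union_right (S : Finset (Fin n)) {T T' : Finset (Fin n)} (h : Disjoint T T') :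
    crossSign K d S (T ∪ T') = crossSign K d S T * crossSign K d S T' := by
  unfold crossSign
  simp_rw [Finset.prod_union h, Finset.prod_mul_distrib]

lemma crossSign_empty_left (T : Finset (Fin n)) : crossSign K d ∅ T = 1 := by simp [crossSign]

lemma crossSign_empty_right (S : Finset (Fin n)) : crossSign K d S ∅ = 1 := by simp [crossSign]

lemma crossSign_biUnion_left {r : ℕ} (B : Fin r → Finset (Fin n))
    (hB : ∀ i j, i ≠ j → Disjoint (B i) (B j)) (T : Finset (Fin n)) :
    crossSign K d (Finset.univ.biUnion B) T = ∏ a, crossSign K d (B a) T := by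
  unfold crossSign
  rw [Finset.prod_biUnion (fun i _ j _ hij => hB i j hij)]

lemma crossSign_biUnion_right {r : ℕ} (B : Fin r → Finset (Fin n))
    (hB : ∀ i j, i ≠ j → Disjoint (B i) (B j)) (S : Finset (Fin n)) :
    crossSign K d S (Finset.univ.biUnion B) = ∏ a, crossSign K d S (B a) := by
  unfold crossSign
  simp_rw [Finset.prod_biUnion (fun i _ j _ hij => hB i j hij)]
  rw [Finset.prod_comm]

lemma degOn_biUnion {r : ℕ} (B : Fin r → Finset (Fin n))
    (hB : ∀ i j, i ≠ j → Disjoint (B i) (B j)) :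
    degOn d (Finset.univ.biUnion B) = ∑ a, degOn d (B a) := by
  unfold degOn
  rw [Finset.sum_biUnion (fun i _ j _ hij => hB i j hij)]

lemma crossSign_mul_swap {S T : Finset (Fin n)} (h : Disjoint S T) :
    crossSign K d S T * crossSign K d T S = ksign K (degOn d S * degOn d T) := by
  unfold crossSign degOn
  rw [Finset.prod_comm (s := T), ← Finset.prod_mul_distrib, Finset.sum_mul_sum, ksign_sum]
  refine Finset.prod_congr rfl fun i hi => ?_
  rw [ksign_sum, ← Finset.prod_mul_distrib]
  refine Finset.prod_congr rfl fun j hj => ?_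
  have hij : i ≠ j := fun e => Finset.disjoint_left.mp h hi (e ▸ hj)
  unfold pairSign
  rcases lt_or_gt_of_ne hij with hl | hl
  · simp [hl, hl.not_gt, mul_comm (d j)]
  · simp [hl, hl.not_gt]

lemma crossSign_mul_self (S T : Finset (Fin n)) :
    crossSign K d S T * crossSign K d S T = 1 := by
  unfold crossSign
  rw [← Finset.prod_mul_distrib]
  refine Finset.prod_eq_one fun i _ => ?_
  rw [← Finset.prod_mul_distrib]
  refine Finset.prod_eq_one fun j _ => ?_
  unfold pairSign
  split_ifs
  · exact ksign_mul_self K _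
  · simp

lemma crossSign_swap {S T : Finset (Fin n)} (h : Disjoint S T) :
    crossSign K d T S = crossSign K d S T * ksign K (degOn d S * degOn d T) := by
  rw [← crossSign_mul_swap K d h, ← mul_assoc, crossSign_mul_self, one_mul]

lemma crossSign_map {m : ℕ} (e : Fin m ↪o Fin n) (S T : Finset (Fin m)) :
    crossSign K (fun i => d (e i)) S T =
      crossSign K d (S.map e.toEmbedding) (T.map e.toEmbedding) := by
  simp [crossSign, pairSign]

lemma degOn_map {m : ℕ} (e : Fin m ↪o Fin n) (S : Finset (Fin m)) :
    degOn (fun i => d (e i)) S = degOn d (S.map e.toEmbedding) := by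
  simp [degOn]

/-- If `σ` lists the entries by increasing label, entries with equal labels in increasing order,
then its Koszul sign only involves the pairs whose labels are out of order. The label of the
entry `x` is `g (σ.symm x)`. -/
lemma koszulSign_eq_of_labels {ι : Type*} [LinearOrder ι] (σ : Equiv.Perm (Fin n))
    (g : Fin n → ι) (hg : Monotone g) (hσ : ∀ a b, a < b → g a = g b → σ a < σ b) :
    koszulSign K d σ =
      ∏ x, ∏ y, if g (σ.symm x) < g (σ.symm y) then pairSign K d x y else 1 := by
  unfold koszulSign
  rw [Finset.prod_filter, Fintype.prod_prod_type, Finset.prod_comm]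
  refine Finset.prod_congr rfl fun x _ => Finset.prod_congr rfl fun y _ => ?_
  unfold pairSign
  have key : (y < x ∧ σ.symm x < σ.symm y) ↔ (g (σ.symm x) < g (σ.symm y) ∧ y < x) := by
    constructor
    · rintro ⟨h1, h2⟩
      refine ⟨lt_of_le_of_ne (hg h2.le) fun h => ?_, h1⟩
      have := hσ _ _ h2 h
      simp only [Equiv.apply_symm_apply] at this
      exact absurd h1 this.not_gt
    · rintro ⟨h1, h2⟩
      exact ⟨h2, lt_of_not_ge fun h => absurd h1 (hg h).not_gt⟩
  simp only [key, ite_and, mul_comm (d y)]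

lemma prod_labels_eq {ι : Type*} [LinearOrder ι] [Fintype ι] (f : Fin n → ι) :
    (∏ x, ∏ y, if f x < f y then pairSign K d x y else 1) =
      ∏ l, ∏ l', if l < l' then crossSign K d (Finset.univ.filter fun x => f x = l)
        (Finset.univ.filter fun x => f x = l') else 1 := by
  rw [← Finset.prod_fiberwise Finset.univ f]
  refine Finset.prod_congr rfl fun l _ => ?_
  have h1 : ∀ x ∈ Finset.univ.filter (fun x => f x = l),
      (∏ y, if f x < f y then pairSign K d x y else 1) =
      ∏ l', ∏ y ∈ Finset.univ.filter (fun y => f y = l'),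
        if l < l' then pairSign K d x y else 1 := by
    intro x hx
    rw [← Finset.prod_fiberwise Finset.univ f]
    refine Finset.prod_congr rfl fun l' _ => Finset.prod_congr rfl fun y hy => ?_
    simp only [Finset.mem_filter, Finset.mem_univ, true_and] at hx hy
    rw [hx, hy]
  rw [Finset.prod_congr rfl h1, Finset.prod_comm]
  refine Finset.prod_congr rfl fun l' _ => ?_
  split_ifs
  · rfl
  · simp

end Signs

/-! ### Evaluating on subsets, and blocks of permutations -/

section Blocks

/-- The value of a family of functions of tuples on the subtuple of `p` indexed by `T`, listed in
increasing order. -/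
def onSet {M X : Type*} {k : ℕ} (G : ∀ n : ℕ, (Fin n → M) → X) (p : Fin k → M)
    (T : Finset (Fin k)) : X :=
  G T.card fun u => p (T.orderEmbOfFin rfl u)

lemma onSet_eq {M X : Type*} {k : ℕ} (G : ∀ n : ℕ, (Fin n → M) → X) (p : Fin k → M)
    (T : Finset (Fin k)) {n : ℕ} (f : Fin n → Fin k) (hf : StrictMono f)
    (hT : Finset.univ.image f = T) : G n (fun u => p (f u)) = onSet G p T := by
  have hc : T.card = n := by
    rw [← hT, Finset.card_image_of_injective _ hf.injective, Finset.card_univ, Fintype.card_fin]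
  subst hc
  have := Finset.orderEmbOfFin_unique (s := T) rfl (f := f)
    (fun x => hT ▸ Finset.mem_image_of_mem f (Finset.mem_univ x)) hf
  unfold onSet
  rw [this]

lemma image_orderEmbOfFin {k : ℕ} (T : Finset (Fin k)) :
    Finset.univ.image (T.orderEmbOfFin rfl) = T := by
  apply Finset.coe_injective
  simp

lemma onSet_map {M X : Type*} {k m : ℕ} (G : ∀ n : ℕ, (Fin n → M) → X) (p : Fin k → M)
    (e : Fin m ↪o Fin k) (U : Finset (Fin m)) :
    onSet G (fun i => p (e i)) U = onSet G p (U.map e.toEmbedding) := by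
  refine onSet_eq G p _ (fun u => e (U.orderEmbOfFin rfl u))
    (e.strictMono.comp (U.orderEmbOfFin rfl).strictMono) ?_
  rw [show (fun u => e (U.orderEmbOfFin rfl u)) = e ∘ (U.orderEmbOfFin rfl) from rfl,
    ← Finset.image_image, image_orderEmbOfFin, Finset.map_eq_image]
  rfl

lemma onSet_univ {M X : Type*} {k : ℕ} (G : ∀ n : ℕ, (Fin n → M) → X) (p : Fin k → M) :
    onSet G p Finset.univ = G k p :=
  (onSet_eq G p Finset.univ id strictMono_id (by simp)).symm

/-- The values taken by `σ` on the positions `off, …, off + len - 1`. -/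
def blk {k : ℕ} (σ : Equiv.Perm (Fin k)) (off len : ℕ) : Finset (Fin k) :=
  Finset.univ.filter fun x => off ≤ (σ.symm x : ℕ) ∧ (σ.symm x : ℕ) < off + len

lemma pidx_of_lt {k : ℕ} (σ : Equiv.Perm (Fin k)) {m : ℕ} (h : m < k) :
    pidx σ m = (σ ⟨m, h⟩ : ℕ) := by simp [pidx, h]

lemma fget_pidx {k : ℕ} {α : Type*} [Zero α] (q : Fin k → α) (σ : Equiv.Perm (Fin k)) {m : ℕ}
    (h : m < k) : fget q (pidx σ m) = q (σ ⟨m, h⟩) := by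
  simp [fget, pidx, h]

/-- The enumeration of a block by its positions. -/
def blkFun {k : ℕ} (σ : Equiv.Perm (Fin k)) (off len : ℕ) (h : off + len ≤ k) (u : Fin len) :
    Fin k := σ ⟨off + u, by omega⟩

lemma image_blkFun {k : ℕ} (σ : Equiv.Perm (Fin k)) (off len : ℕ) (h : off + len ≤ k) :
    Finset.univ.image (blkFun σ off len h) = blk σ off len := by
  ext x
  simp only [Finset.mem_image, Finset.mem_univ, true_and, blk, Finset.mem_filter, blkFun]
  constructor
  · rintro ⟨u, rfl⟩
    simp
  · rintro ⟨h1, h2⟩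
    refine ⟨⟨(σ.symm x : ℕ) - off, by omega⟩, ?_⟩
    have : (⟨off + ((σ.symm x : ℕ) - off), by omega⟩ : Fin k) = σ.symm x := by
      ext; simp; omega
    simp [this]

lemma blkFun_injective {k : ℕ} (σ : Equiv.Perm (Fin k)) (off len : ℕ) (h : off + len ≤ k) :
    Function.Injective (blkFun σ off len h) := by
  intro u v huv
  have := σ.injective huv
  simp only [Fin.mk.injEq] at this
  ext; omega

lemma card_blk {k : ℕ} (σ : Equiv.Perm (Fin k)) (off len : ℕ) (h : off + len ≤ k) :
    (blk σ off len).card = len := by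
  rw [← image_blkFun σ off len h, Finset.card_image_of_injective _ (blkFun_injective σ off len h)]
  simp

lemma sum_blk {k : ℕ} (d : Fin k → ℤ) (σ : Equiv.Perm (Fin k)) (off len : ℕ)
    (h : off + len ≤ k) :
    ∑ u ∈ Finset.range len, fget d (pidx σ (off + u)) = degOn d (blk σ off len) := by
  rw [degOn, ← image_blkFun σ off len h,
    Finset.sum_image (fun x _ y _ hxy => blkFun_injective σ off len h hxy), Finset.sum_range]
  refine Finset.sum_congr rfl fun u _ => ?_
  rw [fget_pidx d σ (by omega : off + (u : ℕ) < k)]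
  rfl

lemma onSet_blk {M X : Type*} [Zero M] {k : ℕ} (G : ∀ n : ℕ, (Fin n → M) → X) (p : Fin k → M)
    (σ : Equiv.Perm (Fin k)) (off len : ℕ) (h : off + len ≤ k)
    (hinc : StrictMono (blkFun σ off len h)) :
    G len (fun u : Fin len => fget p (pidx σ (off + (u : ℕ)))) = onSet G p (blk σ off len) := by
  rw [← onSet_eq G p _ (blkFun σ off len h) hinc (image_blkFun σ off len h)]
  congr 1
  funext u
  rw [fget_pidx p σ (by omega : off + (u : ℕ) < k)]
  rfl

/-- A monotone labelling takes values below `j` on an initial segment, whose length is the number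
of such values. -/
lemma monotone_lt_iff {ι : Type*} [LinearOrder ι] {n : ℕ} (g : Fin n → ι) (hg : Monotone g)
    (j : ι) (m : Fin n) :
    g m < j ↔ (m : ℕ) < (Finset.univ.filter fun x => g x < j).card := by
  constructor
  · intro h
    have : Finset.Iic m ⊆ Finset.univ.filter fun x => g x < j := by
      intro x hx
      simp only [Finset.mem_filter, Finset.mem_univ, true_and]
      exact lt_of_le_of_lt (hg (Finset.mem_Iic.mp hx)) h
    have := Finset.card_le_card this
    rw [Fin.card_Iic] at this
    omega
  · intro h
    by_contra hc
    have : (Finset.univ.filter fun x => g x < j) ⊆ Finset.Iio m := by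
      intro x hx
      simp only [Finset.mem_filter, Finset.mem_univ, true_and] at hx
      exact Finset.mem_Iio.mpr (lt_of_not_ge fun hmx => hc (lt_of_le_of_lt (hg hmx) hx))
    have := Finset.card_le_card this
    rw [Fin.card_Iio] at this
    omega

lemma sort_lt_iff {ι : Type*} [LinearOrder ι] {n : ℕ} (f : Fin n → ι) (j : ι) (x : Fin n) :
    f x < j ↔ ((Tuple.sort f).symm x : ℕ) < (Finset.univ.filter fun x => f x < j).card := by
  have h := monotone_lt_iff (f ∘ Tuple.sort f) (Tuple.monotone_sort f) j ((Tuple.sort f).symm x)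
  have hc : (Finset.univ.filter fun x => (f ∘ Tuple.sort f) x < j).card =
      (Finset.univ.filter fun x => f x < j).card :=
    Finset.card_equiv (Tuple.sort f) (by simp)
  rw [hc] at h
  simpa using h

lemma sort_tie {ι : Type*} [LinearOrder ι] {n : ℕ} (f : Fin n → ι) (a b : Fin n) (hab : a < b)
    (h : f (Tuple.sort f a) = f (Tuple.sort f b)) : Tuple.sort f a < Tuple.sort f b :=
  (Tuple.eq_sort_iff.mp rfl).2 a b hab h

end Blocks

/-! ### Unshuffles as subsets -/

section Unshuffles

variable {n i : ℕ}

/-- The label of an entry with respect to a subset: `0` inside and `1` outside. -/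
def indLabel (U : Finset (Fin n)) (x : Fin n) : ℕ := if x ∈ U then 0 else 1

lemma mem_unshuffles {σ : Equiv.Perm (Fin n)} : σ ∈ unshuffles n i ↔
    ∀ a b : Fin n, a < b → (((b : ℕ) < i) ∨ (i ≤ (a : ℕ))) → σ a < σ b := by
  simp [unshuffles]

lemma unshuffle_strictMono_left {σ : Equiv.Perm (Fin n)} (h : σ ∈ unshuffles n i)
    (hi : 0 + i ≤ n) : StrictMono (blkFun σ 0 i hi) := by
  intro u v huv
  have h' : (u : ℕ) < v := huv
  have hv := v.isLt
  refine mem_unshuffles.mp h _ _ (Fin.mk_lt_mk.mpr ?_) (Or.inl ?_)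
  · omega
  · dsimp only; omega

lemma unshuffle_strictMono_right {σ : Equiv.Perm (Fin n)} (h : σ ∈ unshuffles n i) {j : ℕ}
    (hi : i + j ≤ n) : StrictMono (blkFun σ i j hi) := by
  intro u v huv
  have h' : (u : ℕ) < v := huv
  refine mem_unshuffles.mp h _ _ (Fin.mk_lt_mk.mpr ?_) (Or.inr ?_)
  · omega
  · dsimp only; omega

lemma blk_compl (σ : Equiv.Perm (Fin n)) {j : ℕ} (h : i + j = n) :
    (blk σ 0 i)ᶜ = blk σ i j := by
  ext x
  have := (σ.symm x).isLt
  simp only [blk, Finset.mem_compl, Finset.mem_filter, Finset.mem_univ, true_and]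
  omega

lemma unshuffle_eq_sort {σ : Equiv.Perm (Fin n)} (h : σ ∈ unshuffles n i) :
    σ = Tuple.sort (indLabel (blk σ 0 i)) := by
  have hl : ∀ m, indLabel (blk σ 0 i) (σ m) = if (m : ℕ) < i then 0 else 1 := by
    intro m; simp [indLabel, blk]
  refine Tuple.eq_sort_iff.mpr ⟨?_, ?_⟩
  · intro a b hab
    simp only [Function.comp, hl]
    have : (a : ℕ) ≤ b := hab
    split_ifs <;> omega
  · intro a b hab he
    rw [hl, hl] at he
    refine mem_unshuffles.mp h a b hab ?_
    have : (a : ℕ) < b := hab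
    split_ifs at he <;> omega

lemma koszulSign_unshuffle (K : Type*) [Field K] (d : Fin n → ℤ) {σ : Equiv.Perm (Fin n)}
    (h : σ ∈ unshuffles n i) :
    koszulSign K d σ = crossSign K d (blk σ 0 i) (blk σ 0 i)ᶜ := by
  rw [koszulSign_eq_of_labels K d σ (fun m => if (m : ℕ) < i then 0 else 1)]
  · unfold crossSign
    rw [← Finset.prod_subset (Finset.subset_univ (blk σ 0 i))]
    · refine Finset.prod_congr rfl fun x hx => ?_
      rw [← Finset.prod_subset (Finset.subset_univ (blk σ 0 i)ᶜ)]
      · refine Finset.prod_congr rfl fun y hy => ?_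
        simp only [blk, Finset.mem_compl, Finset.mem_filter, Finset.mem_univ, true_and] at hx hy
        rw [if_pos]
        split_ifs <;> omega
      · intro y _ hy
        simp only [blk, Finset.mem_compl, Finset.mem_filter, Finset.mem_univ, true_and] at hx hy
        rw [if_neg]
        split_ifs <;> omega
    · intro x _ hx
      refine Finset.prod_eq_one fun y _ => ?_
      simp only [blk, Finset.mem_filter, Finset.mem_univ, true_and] at hx
      rw [if_neg]
      split_ifs <;> omega
  · intro a b hab
    have : (a : ℕ) ≤ b := hab
    dsimp only
    split_ifs <;> omega
  · intro a b hab he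
    refine mem_unshuffles.mp h a b hab ?_
    have : (a : ℕ) < b := hab
    split_ifs at he <;> omega

lemma sum_unshuffles {X : Type*} [AddCommMonoid X] (hi : i ≤ n) (H : Finset (Fin n) → X) :
    ∑ σ ∈ unshuffles n i, H (blk σ 0 i) = ∑ U ∈ Finset.powersetCard i Finset.univ, H U := by
  refine Finset.sum_nbij (fun σ => blk σ 0 i) ?_ ?_ ?_ (fun _ _ => rfl)
  · intro σ _
    simp [Finset.mem_powersetCard, card_blk σ 0 i (by omega)]
  · intro σ hσ τ hτ h
    change blk σ 0 i = blk τ 0 i at h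
    rw [unshuffle_eq_sort hσ, unshuffle_eq_sort hτ, h]
  · intro U hU
    rw [Finset.mem_coe, Finset.mem_powersetCard] at hU
    have hc : (Finset.univ.filter fun x => indLabel U x < 1).card = i := by
      rw [← hU.2]; congr 1; ext x; simp [indLabel]
    have hp := sort_lt_iff (indLabel U) 1
    rw [hc] at hp
    refine ⟨Tuple.sort (indLabel U), ?_, ?_⟩
    · rw [Finset.mem_coe, mem_unshuffles]
      intro a b hab hc
      refine sort_tie _ a b hab ?_
      have h1 := hp (Tuple.sort (indLabel U) a)
      have h2 := hp (Tuple.sort (indLabel U) b)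
      rw [Equiv.symm_apply_apply] at h1 h2
      have hle : ∀ x, indLabel U x ≤ 1 := fun x => by unfold indLabel; split_ifs <;> simp
      have h3 := hle (Tuple.sort (indLabel U) a)
      have h4 := hle (Tuple.sort (indLabel U) b)
      have : (a : ℕ) < b := hab
      omega
    · ext x
      simp only [blk, Finset.mem_filter, Finset.mem_univ, true_and, zero_le, zero_add]
      rw [← hp x]
      simp [indLabel]

lemma sum_powerset_map {X : Type*} [AddCommMonoid X] (T : Finset (Fin n))
    (H : Finset (Fin n) → X) :
    ∑ U : Finset (Fin T.card), H (U.map (T.orderEmbOfFin rfl).toEmbedding) =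
      ∑ U ∈ T.powerset, H U := by
  refine Finset.sum_nbij (fun U => U.map (T.orderEmbOfFin rfl).toEmbedding) ?_ ?_ ?_
    (fun _ _ => rfl)
  · intro U _
    rw [Finset.mem_powerset]
    intro x hx
    obtain ⟨u, _, rfl⟩ := Finset.mem_map.mp hx
    exact Finset.orderEmbOfFin_mem T rfl u
  · intro U _ V _ h
    exact Finset.map_injective _ h
  · intro V hV
    rw [Finset.mem_coe, Finset.mem_powerset] at hV
    refine ⟨Finset.univ.filter fun u => T.orderEmbOfFin rfl u ∈ V, by simp, ?_⟩
    ext x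
    simp only [Finset.mem_map, Finset.mem_filter, Finset.mem_univ, true_and]
    constructor
    · rintro ⟨u, hu, rfl⟩; exact hu
    · intro hx
      have := hV hx
      rw [← image_orderEmbOfFin T] at this
      obtain ⟨u, _, rfl⟩ := Finset.mem_image.mp this
      exact ⟨u, hx, rfl⟩

lemma map_compl_orderEmb (T : Finset (Fin n)) (U : Finset (Fin T.card)) :
    Uᶜ.map (T.orderEmbOfFin rfl).toEmbedding =
      T \ U.map (T.orderEmbOfFin rfl).toEmbedding := by
  ext x
  simp only [Finset.mem_map, Finset.mem_sdiff, Finset.mem_compl, RelEmbedding.coe_toEmbedding]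
  constructor
  · rintro ⟨u, hu, rfl⟩
    refine ⟨Finset.orderEmbOfFin_mem T rfl u, ?_⟩
    rintro ⟨v, hv, hvu⟩
    exact hu ((T.orderEmbOfFin rfl).injective hvu ▸ hv)
  · rintro ⟨hx, h⟩
    rw [← image_orderEmbOfFin T] at hx
    obtain ⟨u, _, rfl⟩ := Finset.mem_image.mp hx
    exact ⟨u, fun hu => h ⟨u, hu, rfl⟩, rfl⟩

end Unshuffles

/-! ### The shuffle product in terms of subsets -/

section Model

variable {K : Type*} [Field K] {A : Type*} [Ring A] [Algebra K A]
variable {M : Type*} [AddCommGroup M] [Module K M] [Module A M] [IsScalarTower K A M]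
variable {degA : ℤ → Submodule K A} {degM : ℤ → Submodule K M}
variable (S : SymModel K A M degA degM)

lemma ev_zero_elt (n : ℕ) (q : Fin n → M) : S.ev n 0 q = 0 := by
  have := S.ev_smul n 0 0 q
  simpa using this

lemma ev_sum_elt {ι : Type*} (s : Finset ι) (x : ι → S.𝒜) (n : ℕ) (q : Fin n → M) :
    S.ev n (∑ i ∈ s, x i) q = ∑ i ∈ s, S.ev n (x i) q := by
  classical
  induction s using Finset.induction_on with
  | empty => simp [ev_zero_elt]
  | insert a s ha ih => rw [Finset.sum_insert ha, Finset.sum_insert ha, S.ev_add, ih]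

lemma proj_zero_elt (r : ℕ) (s : ℤ) : S.proj r s 0 = 0 := by
  have := S.proj_smul r s 0 0
  simpa using this

lemma proj_sum_elt {ι : Type*} (F : Finset ι) (x : ι → S.𝒜) (r : ℕ) (s : ℤ) :
    S.proj r s (∑ i ∈ F, x i) = ∑ i ∈ F, S.proj r s (x i) := by
  classical
  induction F using Finset.induction_on with
  | empty => simp [proj_zero_elt]
  | insert a F ha ih => rw [Finset.sum_insert ha, Finset.sum_insert ha, S.proj_add, ih]

/-- The element `x` is homogeneous of total degree `t`. -/
def HomTot (x : S.𝒜) (t : ℤ) : Prop :=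
  ∀ (r : ℕ) (s : ℤ), S.proj r s x ≠ 0 → (r : ℤ) + s = t

variable {S}

lemma HomTot.of_mem {r : ℕ} {s : ℤ} {x : S.𝒜} (hx : x ∈ S.comp r s) :
    HomTot S x ((r : ℤ) + s) := by
  intro r' s' h
  by_contra hne
  refine h (S.proj_ne hx r' s' fun e => hne ?_)
  simp only [Prod.mk.injEq] at e
  rw [e.1, e.2]

lemma HomTot.ev_proj {x : S.𝒜} {t : ℤ} (hx : HomTot S x t) (n : ℕ) (q : Fin n → M) :
    S.ev n (S.proj n (t - n) x) q = S.ev n x q := by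
  obtain ⟨F, hF⟩ := S.proj_decomp x
  have h0 : ∀ c ∈ F, c ≠ (n, t - (n : ℤ)) → S.ev n (S.proj c.1 c.2 x) q = 0 := by
    intro c _ hc
    by_cases hn : n = c.1
    · have : S.proj c.1 c.2 x = 0 := by
        by_contra hne
        refine hc (Prod.ext hn.symm ?_)
        have := hx _ _ hne
        simp only
        rw [hn]; linarith
      rw [this, ev_zero_elt]
    · exact S.ev_ne (S.proj_mem c.1 c.2 x) n hn q
  conv_rhs => rw [hF, ev_sum_elt]
  by_cases hmem : (n, t - (n : ℤ)) ∈ F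
  · rw [Finset.sum_eq_single_of_mem _ hmem h0]
  · have hz : S.proj n (t - n) x = 0 := by
      conv_lhs => rw [hF, proj_sum_elt]
      refine Finset.sum_eq_zero fun c hc => S.proj_ne (S.proj_mem c.1 c.2 x) _ _ fun e => ?_
      exact hmem (e ▸ hc)
    rw [hz, ev_zero_elt, eq_comm]
    exact Finset.sum_eq_zero fun c hc => h0 c hc fun e => hmem (e ▸ hc)

variable (S)

/-- The value of `x` on the subtuple of `p` indexed by `T`. -/
def evOn (x : S.𝒜) {k : ℕ} (p : Fin k → M) (T : Finset (Fin k)) : A :=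
  onSet (fun n => S.ev n x) p T

variable {k : ℕ} (p : Fin k → M) (T : Finset (Fin k))

lemma evOn_add (x y : S.𝒜) : evOn S (x + y) p T = evOn S x p T + evOn S y p T := S.ev_add _ _ _ _

lemma evOn_smul (c : K) (x : S.𝒜) : evOn S (c • x) p T = c • evOn S x p T := S.ev_smul _ _ _ _

lemma evOn_zero : evOn S 0 p T = 0 := ev_zero_elt S _ _

lemma evOn_sum {ι : Type*} (s : Finset ι) (x : ι → S.𝒜) :
    evOn S (∑ i ∈ s, x i) p T = ∑ i ∈ s, evOn S (x i) p T := ev_sum_elt S _ _ _ _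

variable {S p T} in
lemma evOn_ne {r : ℕ} {s : ℤ} {x : S.𝒜} (hx : x ∈ S.comp r s) (h : T.card ≠ r) :
    evOn S x p T = 0 := S.ev_ne hx _ h _

lemma ev_mul_bihom {r : ℕ} {s : ℤ} {r' : ℕ} {s' : ℤ} {x y : S.𝒜} (hx : x ∈ S.comp r s)
    (hy : y ∈ S.comp r' s') {n : ℕ} (d : Fin n → ℤ) (q : Fin n → M)
    (hq : ∀ i, q i ∈ degM (d i)) :
    S.ev n (x * y) q = ∑ U : Finset (Fin n),
      (crossSign K d U Uᶜ * ksign K (((r' : ℤ) + s') * degOn d U)) •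
        (evOn S x q U * evOn S y q Uᶜ) := by
  by_cases hn : n = r + r'
  · subst hn
    rw [S.ev_mul hx hy d q hq]
    rw [← Finset.sum_subset (Finset.subset_univ
        (Finset.powersetCard r (Finset.univ : Finset (Fin (r + r')))))]
    · rw [← sum_unshuffles (by omega : r ≤ r + r')]
      refine Finset.sum_congr rfl fun σ hσ => ?_
      have h1 := sum_blk d σ 0 r (by omega)
      have h2 := onSet_blk (fun n => S.ev n x) q σ 0 r (by omega)
        (unshuffle_strictMono_left hσ _)
      have h3 := onSet_blk (fun n => S.ev n y) q σ r r' (by omega)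
        (unshuffle_strictMono_right hσ _)
      simp only [zero_add] at h1 h2
      rw [koszulSign_unshuffle K d hσ, h1, h2, h3, blk_compl σ rfl]
      rfl
    · intro U _ hU
      rw [Finset.mem_powersetCard] at hU
      rw [evOn_ne hx (fun h => hU ⟨Finset.subset_univ _, h⟩), zero_mul, smul_zero]
  · rw [S.ev_ne (S.mul_mem hx hy) n hn q, eq_comm]
    refine Finset.sum_eq_zero fun U _ => ?_
    by_cases hU : U.card = r
    · rw [evOn_ne hy, mul_zero, smul_zero]
      rw [Finset.card_compl, Fintype.card_fin]
      have := Finset.card_le_univ U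
      rw [Fintype.card_fin] at this
      omega
    · rw [evOn_ne hx hU, zero_mul, smul_zero]

lemma ev_mul_homTot (x : S.𝒜) {y : S.𝒜} {t : ℤ} (hy : HomTot S y t) {n : ℕ} (d : Fin n → ℤ)
    (q : Fin n → M) (hq : ∀ i, q i ∈ degM (d i)) :
    S.ev n (x * y) q = ∑ U : Finset (Fin n),
      (crossSign K d U Uᶜ * ksign K (t * degOn d U)) •
        (evOn S x q U * evOn S y q Uᶜ) := by
  obtain ⟨F, hF⟩ := S.proj_decomp x
  obtain ⟨G, hG⟩ := S.proj_decomp y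
  have e : ∀ c ∈ F, ∀ c' ∈ G, S.ev n (S.proj c.1 c.2 x * S.proj c'.1 c'.2 y) q =
      ∑ U : Finset (Fin n), (crossSign K d U Uᶜ * ksign K (t * degOn d U)) •
        (evOn S (S.proj c.1 c.2 x) q U * evOn S (S.proj c'.1 c'.2 y) q Uᶜ) := by
    intro c _ c' _
    by_cases h0 : S.proj c'.1 c'.2 y = 0
    · simp [h0, ev_zero_elt, evOn_zero]
    · rw [ev_mul_bihom S (S.proj_mem _ _ _) (S.proj_mem _ _ _) d q hq, hy _ _ h0]
  conv_lhs => rw [hF, hG, Finset.sum_mul_sum]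
  rw [ev_sum_elt]
  simp_rw [ev_sum_elt]
  rw [Finset.sum_congr rfl fun c hc => Finset.sum_congr rfl fun c' hc' => e c hc c' hc']
  conv_rhs =>
    enter [2, U]
    rw [hF, hG, evOn_sum, evOn_sum, Finset.sum_mul_sum, Finset.smul_sum]
    enter [2, c]
    rw [Finset.smul_sum]
  conv_rhs => rw [Finset.sum_comm]
  refine Finset.sum_congr rfl fun c hc => ?_
  conv_rhs => rw [Finset.sum_comm]

lemma evOn_mul_homTot (x : S.𝒜) {y : S.𝒜} {t : ℤ} (hy : HomTot S y t) (d : Fin k → ℤ)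
    (hp : ∀ i, p i ∈ degM (d i)) :
    evOn S (x * y) p T = ∑ U ∈ T.powerset,
      (crossSign K d U (T \ U) * ksign K (t * degOn d U)) •
        (evOn S x p U * evOn S y p (T \ U)) := by
  rw [← sum_powerset_map]
  refine (ev_mul_homTot S x hy (fun u => d (T.orderEmbOfFin rfl u))
    (fun u => p (T.orderEmbOfFin rfl u)) (fun i => hp _)).trans ?_
  refine Finset.sum_congr rfl fun U _ => ?_
  simp only [evOn, onSet_map, crossSign_map, degOn_map, map_compl_orderEmb]

/-- Product with a one-form on the left: exactly one argument is fed to the one-form. -/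
lemma ev_mul_one_form {s : ℤ} {r : ℕ} {s' : ℤ} {x y : S.𝒜} (hx : x ∈ S.comp 1 s)
    (hy : y ∈ S.comp r s') (d : Fin (r + 1) → ℤ) (q : Fin (r + 1) → M)
    (hq : ∀ i, q i ∈ degM (d i)) :
    S.ev (r + 1) (x * y) q = ∑ i : Fin (r + 1),
      ((∏ j : Fin r, if i.succAbove j < i then ksign K (d i * d (i.succAbove j)) else 1) *
        ksign K (((r : ℤ) + s') * d i)) •
        (S.ev 1 x (fun _ => q i) * S.ev r y (fun j => q (i.succAbove j))) := by
  rw [ev_mul_bihom S hx hy d q hq]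
  rw [← Finset.sum_subset (Finset.subset_univ
    (Finset.univ.image fun i : Fin (r + 1) => ({i} : Finset (Fin (r + 1)))))]
  · rw [Finset.sum_image (fun i _ j _ h => Finset.singleton_injective h)]
    refine Finset.sum_congr rfl fun i _ => ?_
    have him : Finset.univ.image i.succAbove = ({i} : Finset (Fin (r + 1)))ᶜ := by
      ext x
      simp
    have h1 : evOn S x q {i} = S.ev 1 x (fun _ => q i) :=
      (onSet_eq (fun n => S.ev n x) q {i} (fun _ : Fin 1 => i)
        (fun a b h => absurd h (by simp [Subsingleton.elim a b])) (by simp)).symm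
    have h2 : evOn S y q ({i} : Finset (Fin (r + 1)))ᶜ = S.ev r y (fun j => q (i.succAbove j)) :=
      (onSet_eq (fun n => S.ev n y) q _ i.succAbove (Fin.strictMono_succAbove i) him).symm
    rw [h1, h2, ← him]
    congr 2
    · rw [crossSign, Finset.prod_singleton,
        Finset.prod_image (fun a _ b _ h => Fin.succAbove_right_injective h)]
      rfl
    · simp [degOn]
  · intro U _ hU
    rw [evOn_ne hx, zero_mul, smul_zero]
    intro hc
    obtain ⟨i, rfl⟩ := Finset.card_eq_one.mp hc
    exact hU (Finset.mem_image_of_mem _ (Finset.mem_univ i))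

lemma ev_incA_mul (a : A) {r : ℕ} {s : ℤ} {y : S.𝒜} (hy : y ∈ S.comp r s)
    {sa : ℤ} (ha : a ∈ degA sa) (d : Fin r → ℤ) (q : Fin r → M) (hq : ∀ i, q i ∈ degM (d i)) :
    S.ev r (S.incA a * y) q = a * S.ev r y q := by
  rw [ev_mul_bihom S (S.incA_mem ha) hy d q hq, Finset.sum_eq_single ∅]
  · have h1 : evOn S (S.incA a) q ∅ = a := S.ev_incA a _
    have h2 : evOn S y q (∅ : Finset (Fin r))ᶜ = S.ev r y q := by
      rw [Finset.compl_empty]; exact onSet_univ _ _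
    rw [h1, h2, crossSign_empty_left]
    simp [degOn, ksign_zero]
  · intro U _ hU
    rw [evOn_ne (S.incA_mem ha) (fun h => hU (Finset.card_eq_zero.mp h)), zero_mul, smul_zero]
  · simp

/-- Every element of `A` is a finite sum of homogeneous ones. -/
lemma exists_sum_homogeneous (S : SymModel K A M degA degM) (a : A) :
    ∃ (F : Finset (ℕ × ℤ)) (b : ℕ × ℤ → A), (∀ c, b c ∈ degA c.2) ∧ a = ∑ c ∈ F, b c := by
  obtain ⟨F, hF⟩ := S.proj_decomp (S.incA a)
  refine ⟨F.filter (fun c => c.1 = 0),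
    fun c => S.ev 0 (S.proj 0 c.2 (S.incA a)) Fin.elim0, ?_, ?_⟩
  · intro c
    have := (S.ev_symform (S.proj_mem 0 c.2 (S.incA a))).2.2.1 Fin.elim0 Fin.elim0
      (fun i => i.elim0)
    simpa using this
  · conv_lhs => rw [← S.ev_incA a Fin.elim0, hF, ev_sum_elt]
    rw [Finset.sum_filter]
    refine Finset.sum_congr rfl fun c _ => ?_
    split_ifs with h
    · rw [h]
    · exact S.ev_ne (S.proj_mem c.1 c.2 _) 0 (fun e => h e.symm) _

end Model

/-! ### Sorted families of disjoint blocks -/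

section Families

variable {k : ℕ}

/-- The smallest element of a subset of `Fin k`, as a natural number (`0` for the empty set). -/
def firstVal (B : Finset (Fin k)) : ℕ := if h : B.Nonempty then (B.min' h : ℕ) else 0

/-- The key by which blocks are sorted: first by length, then by first element. -/
def blockKey (B : Finset (Fin k)) : ℕ ×ₗ ℕ := toLex (B.card, firstVal B)

/-- Families of nonempty, pairwise disjoint subsets of `T`, sorted by `blockKey`; these represent
unordered collections of `r` blocks in `T`. -/
structure GoodFam {r : ℕ} (B : Fin r → Finset (Fin k)) (T : Finset (Fin k)) : Prop where
  nonempty : ∀ i, (B i).Nonempty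
  subset : ∀ i, B i ⊆ T
  disjoint : ∀ i j, i ≠ j → Disjoint (B i) (B j)
  sorted : StrictMono fun i => blockKey (B i)

open Classical in
/-- The finite set of sorted families of `r` blocks in `T`. -/
def goodFams (r : ℕ) (T : Finset (Fin k)) : Finset (Fin r → Finset (Fin k)) :=
  Finset.univ.filter fun B => GoodFam B T

lemma mem_goodFams {r : ℕ} {T : Finset (Fin k)} {B : Fin r → Finset (Fin k)} :
    B ∈ goodFams r T ↔ GoodFam B T := by
  classical
  simp [goodFams]

lemma blockKey_ne {B C : Finset (Fin k)} (hB : B.Nonempty) (hC : C.Nonempty)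
    (h : Disjoint B C) : blockKey B ≠ blockKey C := by
  intro e
  have e' : firstVal B = firstVal C := congrArg (fun z => (ofLex z).2) e
  simp only [firstVal, hB, hC, dif_pos] at e'
  exact Finset.disjoint_left.mp h (B.min'_mem hB) (Fin.ext e' ▸ C.min'_mem hC)

lemma exists_insertNth_strictMono {ι : Type*} [LinearOrder ι] {r : ℕ} (g : Fin r → ι)
    (hg : StrictMono g) (c : ι) (hc : ∀ j, g j ≠ c) :
    ∃ i : Fin (r + 1), StrictMono (Fin.insertNth i c g : Fin (r + 1) → ι) := by
  have hle : (Finset.univ.filter fun x => g x < c).card ≤ r := by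
    simpa using Finset.card_le_univ (Finset.univ.filter fun x => g x < c)
  refine ⟨⟨(Finset.univ.filter fun x => g x < c).card, by omega⟩, ?_⟩
  set i : Fin (r + 1) := ⟨(Finset.univ.filter fun x => g x < c).card, by omega⟩ with hi
  have hpos : ∀ j : Fin r, g j < c ↔ j.castSucc < i := fun j =>
    monotone_lt_iff g hg.monotone c j
  intro a b hab
  rcases Fin.eq_self_or_eq_succAbove i a with rfl | ⟨j, rfl⟩ <;>
    rcases Fin.eq_self_or_eq_succAbove i b with hb | ⟨l, rfl⟩
  · exact absurd hab (by simp [hb])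
  · rw [Fin.insertNth_apply_same, Fin.insertNth_apply_succAbove]
    rw [Fin.lt_succAbove_iff_le_castSucc] at hab
    exact lt_of_le_of_ne (not_lt.mp fun h => absurd ((hpos l).mp h) (not_lt.mpr hab)) (hc l).symm
  · rw [hb] at hab ⊢
    rw [Fin.insertNth_apply_same, Fin.insertNth_apply_succAbove]
    rw [Fin.succAbove_lt_iff_castSucc_lt] at hab
    exact (hpos j).mpr hab
  · rw [Fin.insertNth_apply_succAbove, Fin.insertNth_apply_succAbove]
    exact hg ((Fin.strictMono_succAbove i).lt_iff_lt.mp hab)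

lemma GoodFam.removeNth {r : ℕ} {B : Fin (r + 1) → Finset (Fin k)} {T : Finset (Fin k)}
    (h : GoodFam B T) (i : Fin (r + 1)) : GoodFam (fun j => B (i.succAbove j)) (T \ B i) where
  nonempty _ := h.nonempty _
  subset j := Finset.subset_sdiff.mpr
    ⟨h.subset _, h.disjoint _ _ (Fin.succAbove_ne i j)⟩
  disjoint _ _ hab := h.disjoint _ _ fun e => hab (Fin.succAbove_right_injective e)
  sorted := h.sorted.comp (Fin.strictMono_succAbove i)

/-- Singling out one block of a sorted family of `r + 1` blocks is the same as choosing a block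
together with a sorted family of `r` blocks disjoint from it. -/
lemma sum_goodFams_succ {X : Type*} [AddCommMonoid X] {r : ℕ} (T : Finset (Fin k))
    (H : Finset (Fin k) → (Fin r → Finset (Fin k)) → X) :
    ∑ B ∈ goodFams (r + 1) T, ∑ i, H (B i) (fun j => B (i.succAbove j)) =
      ∑ C ∈ T.powerset.filter (fun C => C.Nonempty), ∑ B ∈ goodFams r (T \ C), H C B := by
  rw [Finset.sum_sigma', Finset.sum_sigma']
  refine Finset.sum_nbij (fun z => ⟨z.1 z.2, fun j => z.1 (z.2.succAbove j)⟩) ?_ ?_ ?_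
    (fun _ _ => rfl)
  · rintro ⟨B, i⟩ hB
    simp only [Finset.mem_sigma, mem_goodFams, Finset.mem_univ, and_true] at hB
    simp only [Finset.mem_sigma, mem_goodFams, Finset.mem_filter, Finset.mem_powerset]
    exact ⟨⟨hB.subset i, hB.nonempty i⟩, hB.removeNth i⟩
  · rintro ⟨B, i⟩ hB ⟨B', i'⟩ hB' heq
    simp only [Finset.coe_sigma, Set.mem_sigma_iff, Finset.mem_coe, mem_goodFams] at hB hB'
    simp only [Sigma.mk.injEq, heq_eq_eq] at heq
    obtain ⟨h1, h2⟩ := heq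
    have hr : Set.range (fun a => blockKey (B a)) = Set.range (fun a => blockKey (B' a)) := by
      have aux : ∀ (B : Fin (r + 1) → Finset (Fin k)) (i : Fin (r + 1)),
          Set.range (fun a => blockKey (B a)) =
            insert (blockKey (B i)) (Set.range fun j => blockKey (B (i.succAbove j))) := by
        intro B i
        ext z
        simp only [Set.mem_range, Set.mem_insert_iff]
        constructor
        · rintro ⟨a, rfl⟩
          rcases Fin.eq_self_or_eq_succAbove i a with rfl | ⟨j, rfl⟩
          · exact Or.inl rfl
          · exact Or.inr ⟨j, rfl⟩
        · rintro (rfl | ⟨j, rfl⟩)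
          · exact ⟨i, rfl⟩
          · exact ⟨_, rfl⟩
      rw [aux B i, aux B' i', h1]
      have h2' : (fun j => blockKey (B (i.succAbove j))) =
          fun j => blockKey (B' (i'.succAbove j)) :=
        funext fun j => congrArg blockKey (congrFun h2 j)
      rw [h2']
    have hkey := (StrictMono.range_inj hB.1.sorted hB'.1.sorted).mp hr
    have hii : i = i' := by
      refine hB'.1.sorted.injective ?_
      have h3 : blockKey (B i) = blockKey (B' i) := congrFun hkey i
      change blockKey (B' i) = blockKey (B' i')
      rw [← h3, h1]
    subst hii
    have hBB : B = B' := by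
      funext a
      rcases Fin.eq_self_or_eq_succAbove i a with rfl | ⟨j, rfl⟩
      · exact h1
      · exact congrFun h2 j
    rw [hBB]
  · rintro ⟨C, B⟩ hCB
    simp only [Finset.coe_sigma, Set.mem_sigma_iff, Finset.mem_coe, mem_goodFams,
      Finset.mem_filter, Finset.mem_powerset] at hCB
    obtain ⟨⟨hCT, hC⟩, hB⟩ := hCB
    have hdis : ∀ j, Disjoint (B j) C := fun j => (Finset.subset_sdiff.mp (hB.subset j)).2
    obtain ⟨i, hi⟩ := exists_insertNth_strictMono (fun j => blockKey (B j)) hB.sorted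
      (blockKey C) (fun j => blockKey_ne (hB.nonempty j) hC (hdis j))
    refine ⟨⟨Fin.insertNth i C B, i⟩, ?_, ?_⟩
    · simp only [Finset.coe_sigma, Set.mem_sigma_iff, Finset.mem_coe, mem_goodFams,
        Finset.mem_univ, and_true]
      refine ⟨?_, ?_, ?_, ?_⟩
      · intro a
        rcases Fin.eq_self_or_eq_succAbove i a with rfl | ⟨j, rfl⟩
        · simpa using hC
        · simpa using hB.nonempty j
      · intro a
        rcases Fin.eq_self_or_eq_succAbove i a with rfl | ⟨j, rfl⟩
        · simpa using hCT
        · simpa using (hB.subset j).trans Finset.sdiff_subset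
      · intro a b hab
        rcases Fin.eq_self_or_eq_succAbove i a with ha | ⟨j, rfl⟩ <;>
          rcases Fin.eq_self_or_eq_succAbove i b with hb | ⟨l, rfl⟩
        · exact absurd (ha.trans hb.symm) hab
        · rw [ha]; simpa using (hdis l).symm
        · rw [hb]; simpa using hdis j
        · simpa using hB.disjoint j l (fun e => hab (by rw [e]))
      · have hfun : (fun a => blockKey ((Fin.insertNth i C B : Fin (r + 1) → _) a)) =
            Fin.insertNth i (blockKey C) fun j => blockKey (B j) := by
          funext a
          rcases Fin.eq_self_or_eq_succAbove i a with rfl | ⟨j, rfl⟩ <;> simp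
        rw [hfun]
        exact hi
    · simp

variable (K : Type*) [Field K] (d : Fin k → ℤ)

/-- The Koszul sign of rearranging all entries into the blocks of `B`, one after the other,
followed by the entries of `S`. -/
def famSign {r : ℕ} (B : Fin r → Finset (Fin k)) (S : Finset (Fin k)) : K :=
  (∏ a, ∏ b, if a < b then crossSign K d (B a) (B b) else 1) * ∏ a, crossSign K d (B a) S

lemma famSign_removeNth {r : ℕ} (B : Fin (r + 1) → Finset (Fin k))
    (hB : ∀ i j, i ≠ j → Disjoint (B i) (B j)) (S : Finset (Fin k)) (i : Fin (r + 1)) :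
    famSign K d B S * (∏ j : Fin r, if i.succAbove j < i then
        ksign K (degOn d (B i) * degOn d (B (i.succAbove j))) else 1) =
      crossSign K d (B i) (Finset.univ.biUnion fun j => B (i.succAbove j)) *
        crossSign K d (B i) S * famSign K d (fun j => B (i.succAbove j)) S := by
  rw [crossSign_biUnion_right K d _
    (fun a b hab => hB _ _ fun e => hab (Fin.succAbove_right_injective e))]
  unfold famSign
  rw [Fin.prod_univ_succAbove _ i, Fin.prod_univ_succAbove _ i,
    Fin.prod_univ_succAbove (fun a => crossSign K d (B a) S) i]
  have h1 : ∀ j : Fin r, (∏ b, if i.succAbove j < b then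
      crossSign K d (B (i.succAbove j)) (B b) else 1) =
      (if i.succAbove j < i then crossSign K d (B (i.succAbove j)) (B i) else 1) *
      ∏ l, if j < l then crossSign K d (B (i.succAbove j)) (B (i.succAbove l)) else 1 := by
    intro j
    rw [Fin.prod_univ_succAbove _ i]
    simp only [(Fin.strictMono_succAbove i).lt_iff_lt]
  have h2 : ∀ j : Fin r, crossSign K d (B i) (B (i.succAbove j)) =
      (if i < i.succAbove j then crossSign K d (B i) (B (i.succAbove j)) else 1) *
      ((if i.succAbove j < i then crossSign K d (B (i.succAbove j)) (B i) else 1) *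
      (if i.succAbove j < i then
        ksign K (degOn d (B i) * degOn d (B (i.succAbove j))) else 1)) := by
    intro j
    have hne := Fin.succAbove_ne i j
    rcases lt_or_gt_of_ne hne with h | h
    · rw [if_neg h.not_gt, if_pos h, if_pos h, one_mul,
        crossSign_swap K d (hB _ _ hne), mul_comm (degOn d (B i))]
    · rw [if_pos h, if_neg h.not_gt, if_neg h.not_gt, mul_one, mul_one]
  rw [Finset.prod_congr rfl fun j _ => h1 j, Finset.prod_congr rfl fun j _ => h2 j]
  simp only [Finset.prod_mul_distrib, lt_irrefl, if_false]
  ring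

/-- The sign identity behind the compatibility with products of functions. -/
lemma famSign_split {r : ℕ} (B : Fin r → Finset (Fin k))
    (hB : ∀ i j, i ≠ j → Disjoint (B i) (B j)) {V W : Finset (Fin k)} (hVW : Disjoint V W)
    (hV : Disjoint V (Finset.univ.biUnion B)) (hW : Disjoint W (Finset.univ.biUnion B)) (t : ℤ) :
    famSign K d B (V ∪ W) * (crossSign K d V W *
        ksign K (((∑ a, degOn d (B a)) + t) * degOn d V)) =
      crossSign K d V (Finset.univ.biUnion B ∪ W) * ksign K (t * degOn d V) *
        famSign K d B W := by
  rw [crossSign_union_right K d V hW.symm, ← degOn_biUnion d B hB, add_mul, ksign_add,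
    crossSign_swap K d hV.symm, crossSign_biUnion_left K d B hB]
  unfold famSign
  simp only [crossSign_union_right K d _ hVW, Finset.prod_mul_distrib]
  ring

end Families

/-! ### The component formula in terms of sorted families -/

section Psi

variable {K : Type*} [Field K] {A : Type*} [Ring A] [Algebra K A]
variable {P : Type*} [AddCommGroup P] [Module K P] [Module A P] [IsScalarTower K A P]
variable {Q : Type*} [AddCommGroup Q] [Module K Q] [Module A Q] [IsScalarTower K A Q]
variable {degA : ℤ → Submodule K A} {degP : ℤ → Submodule K P} {degQ : ℤ → Submodule K Q}
variable {SQ : SymModel K A Q degA degQ} {SP : SymModel K A P degA degP}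
variable {ψ : SQ.𝒜 →ₐ[K] SP.𝒜} {Φ : ∀ k : ℕ, (Fin k → P) → Q}

/-- `ψ` preserves the total degree. -/
def PsiDegZero (SQ : SymModel K A Q degA degQ) (SP : SymModel K A P degA degP)
    (ψ : SQ.𝒜 →ₐ[K] SP.𝒜) : Prop :=
  ∀ (r : ℕ) (s : ℤ) (x : SQ.𝒜), x ∈ SQ.comp r s → HomTot SP (ψ x) ((r : ℤ) + s)

lemma onSet_Phi_mem (hΦ : PhiDetermined SQ SP ψ Φ) {k : ℕ} {d : Fin k → ℤ} {p : Fin k → P}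
    (hp : ∀ i, p i ∈ degP (d i)) (B : Finset (Fin k)) : onSet Φ p B ∈ degQ (degOn d B) := by
  have h := hΦ.1 B.card (fun u => d (B.orderEmbOfFin rfl u))
    (fun u => p (B.orderEmbOfFin rfl u)) (fun u => hp _)
  have e : ∑ u, d (B.orderEmbOfFin rfl u) = degOn d B := by
    conv_rhs => rw [degOn, ← image_orderEmbOfFin B]
    rw [Finset.sum_image (fun a _ b _ h => (B.orderEmbOfFin rfl).injective h)]
  rw [e] at h
  exact h

lemma ev_Phi_mem (hΦ : PhiDetermined SQ SP ψ Φ) {k : ℕ} {d : Fin k → ℤ} {p : Fin k → P}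
    (hp : ∀ i, p i ∈ degP (d i)) {r : ℕ} {s : ℤ} {x : SQ.𝒜} (hx : x ∈ SQ.comp r s)
    (B : Fin r → Finset (Fin k)) :
    SQ.ev r x (fun i => onSet Φ p (B i)) ∈ degA ((∑ i, degOn d (B i)) + ((r : ℤ) + s)) :=
  (SQ.ev_symform hx).2.2.1 _ _ fun i => onSet_Phi_mem hΦ hp (B i)

lemma homTot_psi_ev_Phi (hψ : PsiDegZero SQ SP ψ) (hΦ : PhiDetermined SQ SP ψ Φ) {k : ℕ}
    {d : Fin k → ℤ} {p : Fin k → P} (hp : ∀ i, p i ∈ degP (d i)) {r : ℕ} {s : ℤ} {x : SQ.𝒜}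
    (hx : x ∈ SQ.comp r s) (B : Fin r → Finset (Fin k)) :
    HomTot SP (ψ (SQ.incA (SQ.ev r x fun i => onSet Φ p (B i))))
      ((∑ i, degOn d (B i)) + ((r : ℤ) + s)) := by
  have := hψ _ _ _ (SQ.incA_mem (ev_Phi_mem hΦ hp hx B))
  rwa [Nat.cast_zero, zero_add] at this

lemma evOn_psi_empty (hψp : ∀ x : SQ.𝒜, SP.ev 0 (ψ x) Fin.elim0 = SQ.ev 0 x Fin.elim0)
    {k : ℕ} (p : Fin k → P) (x : SQ.𝒜) :
    evOn SP (ψ x) p ∅ = SQ.ev 0 x Fin.elim0 := by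
  rw [← hψp]
  exact congrArg (SP.ev 0 (ψ x)) (Subsingleton.elim _ _)

/-- The defining relation of `Φ`, solved for `ψ` of a one-form: the first block is fed to `Φ`, the
remaining entries to `ψ`. -/
lemma psi_one_form_tuple (hψ : PsiDegZero SQ SP ψ)
    (hψp : ∀ x : SQ.𝒜, SP.ev 0 (ψ x) Fin.elim0 = SQ.ev 0 x Fin.elim0)
    (hΦ : PhiDetermined SQ SP ψ Φ) {s : ℤ} {x : SQ.𝒜} (hx : x ∈ SQ.comp 1 s) {n : ℕ}
    (d : Fin n → ℤ) (q : Fin n → P) (hq : ∀ i, q i ∈ degP (d i)) :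
    SP.ev n (ψ x) q = ∑ U ∈ Finset.univ.filter (fun U : Finset (Fin n) => U.Nonempty),
      crossSign K d U Uᶜ •
        evOn SP (ψ (SQ.incA (SQ.ev 1 x fun _ => onSet Φ q U))) q Uᶜ := by
  rcases n with _ | m
  · rw [Subsingleton.elim q Fin.elim0, hψp, SQ.ev_ne hx 0 (by simp), eq_comm]
    refine Finset.sum_eq_zero fun U hU => ?_
    obtain ⟨u, _⟩ := (Finset.mem_filter.mp hU).2
    exact u.elim0
  have key := hΦ.2.2.2 (m + 1) x hx d q hq
  have hpx : SP.ev (m + 1) (SP.proj (m + 1) (1 + s - ((m + 1 : ℕ) : ℤ)) (ψ x)) q =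
      SP.ev (m + 1) (ψ x) q := by
    have := (hψ 1 s x hx).ev_proj (m + 1) q
    rwa [Nat.cast_one] at this
  rw [hpx, eq_sub_iff_add_eq] at key
  rw [← key, ← Finset.sum_fiberwise_of_maps_to (g := fun U : Finset (Fin (m + 1)) => U.card)
    (t := Finset.Icc 1 (m + 1))]
  swap
  · intro U hU
    have h1 := Finset.card_pos.mpr (Finset.mem_filter.mp hU).2
    have h2 : U.card ≤ m + 1 := by simpa using Finset.card_le_univ U
    exact Finset.mem_Icc.mpr ⟨h1, h2⟩
  have hfib : ∀ i, 1 ≤ i → (Finset.univ.filter fun U : Finset (Fin (m + 1)) => U.Nonempty).filter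
      (fun U => U.card = i) = Finset.powersetCard i Finset.univ := by
    intro i hi
    ext U
    simp only [Finset.mem_filter, Finset.mem_univ, true_and, Finset.mem_powersetCard,
      Finset.subset_univ, and_iff_right_iff_imp]
    intro h
    exact Finset.card_pos.mp (by omega)
  rw [Finset.sum_Icc_succ_top (by omega), add_comm]
  congr 1
  · rw [show m + 1 - 1 = m from rfl]
    refine Finset.sum_congr rfl fun i hi => ?_
    rw [Finset.mem_Icc] at hi
    rw [hfib i hi.1, ← sum_unshuffles (by omega : i ≤ m + 1)]
    refine Finset.sum_congr rfl fun σ hσ => ?_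
    have h1 := sum_blk d σ 0 i (by omega)
    have h2 := onSet_blk Φ q σ 0 i (by omega) (unshuffle_strictMono_left hσ _)
    simp only [zero_add] at h1 h2
    rw [koszulSign_unshuffle K d hσ, h1, h2,
      onSet_blk (fun n => SP.ev n _) q σ i (m + 1 - i) (by omega)
        (unshuffle_strictMono_right hσ _), blk_compl σ (by omega : i + (m + 1 - i) = m + 1)]
    congr 1
    have hh := homTot_psi_ev_Phi hψ hΦ hq hx fun _ => blk σ 0 i
    have hc : (blk σ i (m + 1 - i)).card = m + 1 - i := card_blk σ i _ (by omega)
    have e : degOn d (blk σ 0 i) + 1 + s - (((m + 1 : ℕ) : ℤ) - (i : ℤ)) =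
        ((∑ _ : Fin 1, degOn d (blk σ 0 i)) + (((1 : ℕ) : ℤ) + s)) -
          ((blk σ i (m + 1 - i)).card : ℤ) := by
      rw [hc, Nat.cast_sub (by omega)]
      simp
      ring
    have := hh.ev_proj (blk σ i (m + 1 - i)).card
      (fun u => q ((blk σ i (m + 1 - i)).orderEmbOfFin rfl u))
    rw [← e] at this
    refine Eq.trans ?_ this
    exact congrArg (fun m' => SP.ev (blk σ i (m + 1 - i)).card (SP.proj m'
      (degOn d (blk σ 0 i) + 1 + s - (((m + 1 : ℕ) : ℤ) - (i : ℤ))) (ψ (SQ.incA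
        (SQ.ev 1 x fun _ => onSet Φ q (blk σ 0 i)))))
      fun u => q ((blk σ i (m + 1 - i)).orderEmbOfFin rfl u)) hc.symm
  · rw [hfib (m + 1) (by omega)]
    have : Finset.powersetCard (m + 1) (Finset.univ : Finset (Fin (m + 1))) = {Finset.univ} := by
      ext U
      rw [Finset.mem_powersetCard, Finset.mem_singleton, ← Finset.card_eq_iff_eq_univ,
        Fintype.card_fin]
      exact and_iff_right (Finset.subset_univ U)
    rw [this, Finset.sum_singleton, Finset.compl_univ, crossSign_empty_right, one_smul,
      evOn_psi_empty hψp, SQ.ev_incA, onSet_univ]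

lemma psi_one_form (hψ : PsiDegZero SQ SP ψ)
    (hψp : ∀ x : SQ.𝒜, SP.ev 0 (ψ x) Fin.elim0 = SQ.ev 0 x Fin.elim0)
    (hΦ : PhiDetermined SQ SP ψ Φ) {s : ℤ} {x : SQ.𝒜} (hx : x ∈ SQ.comp 1 s) {k : ℕ}
    (d : Fin k → ℤ) (p : Fin k → P) (hp : ∀ i, p i ∈ degP (d i)) (T : Finset (Fin k)) :
    evOn SP (ψ x) p T = ∑ C ∈ T.powerset.filter (fun C => C.Nonempty),
      crossSign K d C (T \ C) •
        evOn SP (ψ (SQ.incA (SQ.ev 1 x fun _ => onSet Φ p C))) p (T \ C) := by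
  rw [Finset.sum_filter, ← sum_powerset_map]
  refine (psi_one_form_tuple hψ hψp hΦ hx (fun u => d (T.orderEmbOfFin rfl u))
    (fun u => p (T.orderEmbOfFin rfl u)) (fun i => hp _)).trans ?_
  rw [Finset.sum_filter]
  refine Finset.sum_congr rfl fun U _ => ?_
  simp only [evOn, onSet_map, crossSign_map, map_compl_orderEmb, Finset.map_nonempty]

/-- The component formula for `ψ x`, on every subtuple of `p`, as a sum over unordered collections
of blocks. -/
def PsiFormula (SQ : SymModel K A Q degA degQ) (SP : SymModel K A P degA degP)
    (ψ : SQ.𝒜 →ₐ[K] SP.𝒜) (Φ : ∀ k : ℕ, (Fin k → P) → Q) {k : ℕ} (d : Fin k → ℤ)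
    (p : Fin k → P) (r : ℕ) (x : SQ.𝒜) : Prop :=
  ∀ T : Finset (Fin k), evOn SP (ψ x) p T = ∑ B ∈ goodFams r T,
    famSign K d B (T \ Finset.univ.biUnion B) •
      evOn SP (ψ (SQ.incA (SQ.ev r x fun i => onSet Φ p (B i)))) p (T \ Finset.univ.biUnion B)

lemma goodFam_sdiff_iff {k r : ℕ} {B : Fin r → Finset (Fin k)} {V T : Finset (Fin k)} :
    (V ∈ T.powerset ∧ B ∈ goodFams r (T \ V)) ↔
      (V ∈ (T \ Finset.univ.biUnion B).powerset ∧ B ∈ goodFams r T) := by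
  simp only [Finset.mem_powerset, mem_goodFams, Finset.subset_sdiff,
    Finset.disjoint_biUnion_right, Finset.mem_univ, true_implies]
  constructor
  · rintro ⟨h1, h2⟩
    exact ⟨⟨h1, fun i => (Finset.subset_sdiff.mp (h2.subset i)).2.symm⟩,
      ⟨h2.nonempty, fun i => (h2.subset i).trans Finset.sdiff_subset, h2.disjoint, h2.sorted⟩⟩
  · rintro ⟨⟨h1, h3⟩, h2⟩
    exact ⟨h1, ⟨h2.nonempty, fun i => Finset.subset_sdiff.mpr ⟨h2.subset i, (h3 i).symm⟩,
      h2.disjoint, h2.sorted⟩⟩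

/-- If the component formula holds for `ψ y`, then it remains true after multiplying `ψ y` and all
its components from the left with an arbitrary `a`. -/
lemma PsiFormula.mul_fun (hψ : PsiDegZero SQ SP ψ) (hΦ : PhiDetermined SQ SP ψ Φ) {k : ℕ}
    {d : Fin k → ℤ} {p : Fin k → P} (hp : ∀ i, p i ∈ degP (d i)) {r : ℕ} {s : ℤ} {y : SQ.𝒜}
    (hy : y ∈ SQ.comp r s) (h : PsiFormula SQ SP ψ Φ d p r y) (a : SP.𝒜) (T : Finset (Fin k)) :
    evOn SP (a * ψ y) p T = ∑ B ∈ goodFams r T, famSign K d B (T \ Finset.univ.biUnion B) •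
      evOn SP (a * ψ (SQ.incA (SQ.ev r y fun i => onSet Φ p (B i)))) p
        (T \ Finset.univ.biUnion B) := by
  rw [evOn_mul_homTot SP p T a (hψ r s y hy) d hp]
  have hl : ∀ V ∈ T.powerset, (crossSign K d V (T \ V) * ksign K (((r : ℤ) + s) * degOn d V)) •
      (evOn SP a p V * evOn SP (ψ y) p (T \ V)) = ∑ B ∈ goodFams r (T \ V),
        (crossSign K d V (T \ V) * ksign K (((r : ℤ) + s) * degOn d V) *
          famSign K d B ((T \ V) \ Finset.univ.biUnion B)) •
          (evOn SP a p V * evOn SP (ψ (SQ.incA (SQ.ev r y fun i => onSet Φ p (B i)))) p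
            ((T \ V) \ Finset.univ.biUnion B)) := by
    intro V _
    rw [h (T \ V), Finset.mul_sum, Finset.smul_sum]
    refine Finset.sum_congr rfl fun B _ => ?_
    rw [mul_smul_comm, smul_smul]
  rw [Finset.sum_congr rfl hl, Finset.sum_comm' (fun V B => goodFam_sdiff_iff)]
  refine Finset.sum_congr rfl fun B hB => ?_
  rw [mem_goodFams] at hB
  rw [evOn_mul_homTot SP p _ a (homTot_psi_ev_Phi hψ hΦ hp hy B) d hp, Finset.smul_sum]
  refine Finset.sum_congr rfl fun V hV => ?_
  rw [Finset.mem_powerset] at hV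
  have hVd := (Finset.subset_sdiff.mp hV)
  rw [smul_smul, sdiff_right_comm T V]
  congr 1
  have hU : Finset.univ.biUnion B ⊆ T := Finset.biUnion_subset.mpr fun i _ => hB.subset i
  have e1 : T \ Finset.univ.biUnion B = V ∪ (T \ Finset.univ.biUnion B) \ V :=
    (Finset.union_sdiff_of_subset hV).symm
  have e2 : T \ V = Finset.univ.biUnion B ∪ (T \ Finset.univ.biUnion B) \ V := by
    rw [sdiff_right_comm, Finset.union_sdiff_of_subset]
    exact Finset.subset_sdiff.mpr ⟨hU, hVd.2.symm⟩
  have e3 := famSign_split K d B hB.disjoint (V := V)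
    (W := (T \ Finset.univ.biUnion B) \ V) Finset.disjoint_sdiff hVd.2
    ((Finset.sdiff_disjoint).mono_left Finset.sdiff_subset) ((r : ℤ) + s)
  rw [← e1, ← e2] at e3
  rw [e3]

lemma sum_powerset_powerset {X : Type*} [AddCommMonoid X] {k : ℕ} (T : Finset (Fin k))
    (H : Finset (Fin k) → Finset (Fin k) → X) :
    ∑ U ∈ T.powerset, ∑ C ∈ U.powerset.filter (fun C => C.Nonempty), H C (U \ C) =
      ∑ C ∈ T.powerset.filter (fun C => C.Nonempty), ∑ V ∈ (T \ C).powerset, H C V := by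
  rw [Finset.sum_sigma', Finset.sum_sigma']
  refine Finset.sum_bij' (fun z _ => ⟨z.2, z.1 \ z.2⟩) (fun z _ => ⟨z.1 ∪ z.2, z.1⟩)
    ?_ ?_ ?_ ?_ (fun _ _ => rfl)
  · rintro ⟨U, C⟩ h
    simp only [Finset.mem_sigma, Finset.mem_powerset, Finset.mem_filter] at h ⊢
    exact ⟨⟨h.2.1.trans h.1, h.2.2⟩, Finset.sdiff_subset_sdiff h.1 subset_rfl⟩
  · rintro ⟨C, V⟩ h
    simp only [Finset.mem_sigma, Finset.mem_powerset, Finset.mem_filter] at h ⊢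
    exact ⟨Finset.union_subset h.1.1 (h.2.trans Finset.sdiff_subset),
      Finset.subset_union_left, h.1.2⟩
  · rintro ⟨U, C⟩ h
    simp only [Finset.mem_sigma, Finset.mem_powerset, Finset.mem_filter] at h
    simp only [Finset.union_sdiff_of_subset h.2.1]
  · rintro ⟨C, V⟩ h
    simp only [Finset.mem_sigma, Finset.mem_powerset, Finset.mem_filter] at h
    have := (Finset.subset_sdiff.mp h.2).2
    simp only [Finset.union_sdiff_cancel_left this.symm]

lemma PsiFormula.incA_mul (hψ : PsiDegZero SQ SP ψ) (hΦ : PhiDetermined SQ SP ψ Φ) {k : ℕ}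
    {d : Fin k → ℤ} {p : Fin k → P} (hp : ∀ i, p i ∈ degP (d i)) {r : ℕ} {s : ℤ} {y : SQ.𝒜}
    (hy : y ∈ SQ.comp r s) (h : PsiFormula SQ SP ψ Φ d p r y) {sa : ℤ} {a : A}
    (ha : a ∈ degA sa) : PsiFormula SQ SP ψ Φ d p r (SQ.incA a * y) := by
  intro T
  rw [map_mul, h.mul_fun hψ hΦ hp hy]
  refine Finset.sum_congr rfl fun B _ => ?_
  rw [ev_incA_mul SQ a hy ha (fun i => degOn d (B i)) _ fun i => onSet_Phi_mem hΦ hp (B i),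
    map_mul, map_mul]

lemma PsiFormula.one_form_mul (hψ : PsiDegZero SQ SP ψ)
    (hψp : ∀ x : SQ.𝒜, SP.ev 0 (ψ x) Fin.elim0 = SQ.ev 0 x Fin.elim0)
    (hΦ : PhiDetermined SQ SP ψ Φ) {k : ℕ}
    {d : Fin k → ℤ} {p : Fin k → P} (hp : ∀ i, p i ∈ degP (d i)) {r : ℕ} {s : ℤ} {y : SQ.𝒜}
    (hy : y ∈ SQ.comp r s) (h : PsiFormula SQ SP ψ Φ d p r y) {s' : ℤ} {x : SQ.𝒜}
    (hx : x ∈ SQ.comp 1 s') : PsiFormula SQ SP ψ Φ d p (r + 1) (x * y) := by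
  intro T
  -- Single out the block fed to the one-form `x` on the right-hand side.
  have hR : ∀ B ∈ goodFams (r + 1) T, famSign K d B (T \ Finset.univ.biUnion B) •
      evOn SP (ψ (SQ.incA (SQ.ev (r + 1) (x * y) fun i => onSet Φ p (B i)))) p
        (T \ Finset.univ.biUnion B) = ∑ i, (fun (C : Finset (Fin k))
          (B' : Fin r → Finset (Fin k)) =>
          (crossSign K d C (Finset.univ.biUnion B') *
            crossSign K d C ((T \ C) \ Finset.univ.biUnion B') *
            famSign K d B' ((T \ C) \ Finset.univ.biUnion B') *
            ksign K (((r : ℤ) + s) * degOn d C)) •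
          evOn SP (ψ (SQ.incA (SQ.ev 1 x fun _ => onSet Φ p C)) *
            ψ (SQ.incA (SQ.ev r y fun j => onSet Φ p (B' j)))) p
            ((T \ C) \ Finset.univ.biUnion B')) (B i) (fun j => B (i.succAbove j)) := by
    intro B hB
    rw [mem_goodFams] at hB
    rw [ev_mul_one_form SQ hx hy (fun i => degOn d (B i)) _ fun i => onSet_Phi_mem hΦ hp (B i),
      map_sum, map_sum, evOn_sum, Finset.smul_sum]
    refine Finset.sum_congr rfl fun i _ => ?_
    have hU : (T \ B i) \ Finset.univ.biUnion (fun j => B (i.succAbove j)) =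
        T \ Finset.univ.biUnion B := by
      rw [sdiff_sdiff]
      congr 1
      ext z
      simp only [Finset.sup_eq_union, Finset.mem_union, Finset.mem_biUnion, Finset.mem_univ,
        true_and]
      constructor
      · rintro (hz | ⟨j, hz⟩)
        · exact ⟨i, hz⟩
        · exact ⟨_, hz⟩
      · rintro ⟨a, hz⟩
        rcases Fin.eq_self_or_eq_succAbove i a with rfl | ⟨j, rfl⟩
        · exact Or.inl hz
        · exact Or.inr ⟨j, hz⟩
    simp only [hU]
    rw [map_smul, map_smul, evOn_smul, smul_smul, ← mul_assoc,
      famSign_removeNth K d B hB.disjoint, map_mul, map_mul]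
  rw [Finset.sum_congr rfl hR, sum_goodFams_succ T (fun (C : Finset (Fin k))
          (B' : Fin r → Finset (Fin k)) =>
          (crossSign K d C (Finset.univ.biUnion B') *
            crossSign K d C ((T \ C) \ Finset.univ.biUnion B') *
            famSign K d B' ((T \ C) \ Finset.univ.biUnion B') *
            ksign K (((r : ℤ) + s) * degOn d C)) •
          evOn SP (ψ (SQ.incA (SQ.ev 1 x fun _ => onSet Φ p C)) *
            ψ (SQ.incA (SQ.ev r y fun j => onSet Φ p (B' j)))) p
            ((T \ C) \ Finset.univ.biUnion B')), map_mul,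
    evOn_mul_homTot SP p T (ψ x) (hψ r s y hy) d hp]
  have hl : ∀ U ∈ T.powerset, (crossSign K d U (T \ U) * ksign K (((r : ℤ) + s) * degOn d U)) •
      (evOn SP (ψ x) p U * evOn SP (ψ y) p (T \ U)) =
      ∑ C ∈ U.powerset.filter (fun C => C.Nonempty),
        (fun (C V : Finset (Fin k)) =>
          (crossSign K d (C ∪ V) ((T \ C) \ V) * ksign K (((r : ℤ) + s) * degOn d (C ∪ V)) *
            crossSign K d C V) •
          (evOn SP (ψ (SQ.incA (SQ.ev 1 x fun _ => onSet Φ p C))) p V *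
            evOn SP (ψ y) p ((T \ C) \ V))) C (U \ C) := by
    intro U _
    rw [psi_one_form hψ hψp hΦ hx d p hp U, Finset.sum_mul, Finset.smul_sum]
    refine Finset.sum_congr rfl fun C hC => ?_
    have hCU : C ⊆ U := Finset.mem_powerset.mp (Finset.mem_filter.mp hC).1
    have e : (T \ C) \ (U \ C) = T \ U := by
      rw [sdiff_sdiff, Finset.sup_eq_union, Finset.union_sdiff_of_subset hCU]
    simp only [e, Finset.union_sdiff_of_subset hCU]
    rw [smul_mul_assoc, smul_smul]
  rw [Finset.sum_congr rfl hl, sum_powerset_powerset T (fun (C V : Finset (Fin k)) =>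
          (crossSign K d (C ∪ V) ((T \ C) \ V) * ksign K (((r : ℤ) + s) * degOn d (C ∪ V)) *
            crossSign K d C V) •
          (evOn SP (ψ (SQ.incA (SQ.ev 1 x fun _ => onSet Φ p C))) p V *
            evOn SP (ψ y) p ((T \ C) \ V)))]
  refine Finset.sum_congr rfl fun C hC => ?_
  have hCT : C ⊆ T := Finset.mem_powerset.mp (Finset.mem_filter.mp hC).1
  -- For fixed `C`, both sides are `± ψ(x(Φ C)) * ψ(y)` evaluated on `T \ C`.
  have hfix := h.mul_fun hψ hΦ hp hy (ψ (SQ.incA (SQ.ev 1 x fun _ => onSet Φ p C))) (T \ C)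
  rw [evOn_mul_homTot SP p _ _ (hψ r s y hy) d hp] at hfix
  have hfix' := congrArg
    (fun z => (crossSign K d C (T \ C) * ksign K (((r : ℤ) + s) * degOn d C)) • z) hfix
  simp only [Finset.smul_sum, smul_smul] at hfix'
  refine Eq.trans (Finset.sum_congr rfl fun V hV => ?_) (hfix'.trans
    (Finset.sum_congr rfl fun B hB => ?_))
  · rw [Finset.mem_powerset] at hV
    have hVd := (Finset.subset_sdiff.mp hV).2
    congr 1
    rw [crossSign_union_left K d hVd.symm, degOn_union d hVd.symm, mul_add, ksign_add]
    conv_rhs => rw [← Finset.union_sdiff_of_subset hV,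
      crossSign_union_right K d C Finset.disjoint_sdiff]
    rw [Finset.union_sdiff_of_subset hV]
    ring
  · rw [mem_goodFams] at hB
    have hU : Finset.univ.biUnion B ⊆ T \ C := Finset.biUnion_subset.mpr fun i _ => hB.subset i
    congr 1
    conv_lhs => rw [← Finset.union_sdiff_of_subset hU,
      crossSign_union_right K d C Finset.disjoint_sdiff]
    rw [Finset.union_sdiff_of_subset hU]
    ring

end Psi

/-! ### Reduction to the generators -/

section Generation

variable {K : Type*} [Field K] {A : Type*} [Ring A] [Algebra K A]
variable {P : Type*} [AddCommGroup P] [Module K P] [Module A P] [IsScalarTower K A P]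
variable {Q : Type*} [AddCommGroup Q] [Module K Q] [Module A Q] [IsScalarTower K A Q]
variable {degA : ℤ → Submodule K A} {degP : ℤ → Submodule K P} {degQ : ℤ → Submodule K Q}
variable {SQ : SymModel K A Q degA degQ} {SP : SymModel K A P degA degP}
variable {ψ : SQ.𝒜 →ₐ[K] SP.𝒜} {Φ : ∀ k : ℕ, (Fin k → P) → Q}
variable {k : ℕ} {d : Fin k → ℤ} {p : Fin k → P}

lemma PsiFormula.zero (r : ℕ) : PsiFormula SQ SP ψ Φ d p r 0 := by
  intro T
  simp [ev_zero_elt, evOn_zero]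

lemma PsiFormula.add {r : ℕ} {x y : SQ.𝒜} (hx : PsiFormula SQ SP ψ Φ d p r x)
    (hy : PsiFormula SQ SP ψ Φ d p r y) : PsiFormula SQ SP ψ Φ d p r (x + y) := by
  intro T
  rw [map_add, evOn_add, hx T, hy T, ← Finset.sum_add_distrib]
  refine Finset.sum_congr rfl fun B _ => ?_
  rw [SQ.ev_add, map_add, map_add, evOn_add, smul_add]

lemma PsiFormula.smul {r : ℕ} {x : SQ.𝒜} (hx : PsiFormula SQ SP ψ Φ d p r x) (c : K) :
    PsiFormula SQ SP ψ Φ d p r (c • x) := by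
  intro T
  rw [map_smul, evOn_smul, hx T, Finset.smul_sum]
  refine Finset.sum_congr rfl fun B _ => ?_
  rw [SQ.ev_smul, map_smul, map_smul, evOn_smul, smul_comm]

lemma PsiFormula.one : PsiFormula SQ SP ψ Φ d p 0 1 := by
  intro T
  have h : goodFams 0 T = {Fin.elim0} := by
    ext B
    rw [mem_goodFams, Finset.mem_singleton]
    exact ⟨fun _ => Subsingleton.elim _ _, fun _ => ⟨fun i => i.elim0, fun i => i.elim0,
      fun i => i.elim0, fun i => i.elim0⟩⟩
  have h1 : ∀ q : Fin 0 → Q, SQ.ev 0 1 q = 1 := by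
    intro q
    rw [← map_one SQ.incA, SQ.ev_incA]
  rw [h, Finset.sum_singleton, h1, map_one SQ.incA]
  simp [famSign]

/-- The span of the bihomogeneous elements satisfying the component formula. -/
def formulaSpan (SQ : SymModel K A Q degA degQ) (SP : SymModel K A P degA degP)
    (ψ : SQ.𝒜 →ₐ[K] SP.𝒜) (Φ : ∀ k : ℕ, (Fin k → P) → Q) {k : ℕ} (d : Fin k → ℤ)
    (p : Fin k → P) : Submodule K SQ.𝒜 :=
  Submodule.span K {x | ∃ r s, x ∈ SQ.comp r s ∧ PsiFormula SQ SP ψ Φ d p r x}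

lemma mul_mem_formulaSpan {g : SQ.𝒜}
    (hg : ∀ r s y, y ∈ SQ.comp r s → PsiFormula SQ SP ψ Φ d p r y →
      g * y ∈ formulaSpan SQ SP ψ Φ d p) :
    ∀ w ∈ formulaSpan SQ SP ψ Φ d p, g * w ∈ formulaSpan SQ SP ψ Φ d p := by
  intro w hw
  induction hw using Submodule.span_induction with
  | mem y hy =>
    obtain ⟨r, s, h1, h2⟩ := hy
    exact hg r s y h1 h2
  | zero => rw [mul_zero]; exact Submodule.zero_mem _
  | add y z _ _ h1 h2 => rw [mul_add]; exact Submodule.add_mem _ h1 h2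
  | smul c y _ h => rw [mul_smul_comm]; exact Submodule.smul_mem _ c h

lemma formulaSpan_eq_top (hψ : PsiDegZero SQ SP ψ)
    (hψp : ∀ x : SQ.𝒜, SP.ev 0 (ψ x) Fin.elim0 = SQ.ev 0 x Fin.elim0)
    (hΦ : PhiDetermined SQ SP ψ Φ) (hA : (1 : A) ∈ degA 0) (hp : ∀ i, p i ∈ degP (d i)) :
    formulaSpan SQ SP ψ Φ d p = ⊤ := by
  have hone : (1 : SQ.𝒜) ∈ formulaSpan SQ SP ψ Φ d p := by
    refine Submodule.subset_span ⟨0, 0, ?_, PsiFormula.one⟩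
    rw [← map_one SQ.incA]
    exact SQ.incA_mem hA
  have key : ∀ g ∈ Algebra.adjoin K ((Set.range SQ.incA) ∪
      ⋃ s : ℤ, ((SQ.comp 1 s : Submodule K SQ.𝒜) : Set SQ.𝒜)),
      ∀ w ∈ formulaSpan SQ SP ψ Φ d p, g * w ∈ formulaSpan SQ SP ψ Φ d p := by
    intro g hg
    induction hg using Algebra.adjoin_induction with
    | mem g hg =>
      refine mul_mem_formulaSpan fun r s y hy h => ?_
      rcases hg with ⟨a, rfl⟩ | hg
      · obtain ⟨F, b, hb, rfl⟩ := exists_sum_homogeneous SQ a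
        rw [map_sum, Finset.sum_mul]
        refine Submodule.sum_mem _ fun c _ => Submodule.subset_span ⟨r, c.2 + s, ?_,
          h.incA_mul hψ hΦ hp hy (hb c)⟩
        have := SQ.mul_mem (SQ.incA_mem (hb c)) hy
        rwa [zero_add] at this
      · obtain ⟨s', hs'⟩ := Set.mem_iUnion.mp hg
        refine Submodule.subset_span ⟨r + 1, s' + s, ?_, h.one_form_mul hψ hψp hΦ hp hy hs'⟩
        have := SQ.mul_mem hs' hy
        rwa [add_comm 1 r] at this
    | algebraMap c =>
      intro w hw
      rw [← Algebra.smul_def]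
      exact Submodule.smul_mem _ c hw
    | add g g' _ _ h1 h2 =>
      intro w hw
      rw [add_mul]
      exact Submodule.add_mem _ (h1 w hw) (h2 w hw)
    | mul g g' _ _ h1 h2 =>
      intro w hw
      rw [mul_assoc]
      exact h1 _ (h2 w hw)
  rw [eq_top_iff]
  intro g _
  have := key g (by rw [SQ.gen]; trivial) 1 hone
  rwa [mul_one] at this

/-- The component formula holds for all bihomogeneous elements, since it holds on a spanning set of
such elements. -/
lemma psiFormula_of_mem (hψ : PsiDegZero SQ SP ψ)
    (hψp : ∀ x : SQ.𝒜, SP.ev 0 (ψ x) Fin.elim0 = SQ.ev 0 x Fin.elim0)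
    (hΦ : PhiDetermined SQ SP ψ Φ) (hA : (1 : A) ∈ degA 0) (hp : ∀ i, p i ∈ degP (d i))
    {r : ℕ} {s : ℤ} {x : SQ.𝒜} (hx : x ∈ SQ.comp r s) : PsiFormula SQ SP ψ Φ d p r x := by
  have hmem : x ∈ formulaSpan SQ SP ψ Φ d p := by
    rw [formulaSpan_eq_top hψ hψp hΦ hA hp]; trivial
  rw [← SQ.proj_eq hx]
  clear hx
  induction hmem using Submodule.span_induction with
  | mem y hy =>
    obtain ⟨r', s', h1, h2⟩ := hy
    by_cases h : (r, s) = (r', s')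
    · simp only [Prod.mk.injEq] at h
      rw [h.1, h.2, SQ.proj_eq h1]
      exact h2
    · rw [SQ.proj_ne h1 r s h]
      exact PsiFormula.zero r
  | zero => rw [proj_zero_elt]; exact PsiFormula.zero r
  | add y z _ _ h1 h2 => rw [SQ.proj_add]; exact h1.add h2
  | smul c y _ h => rw [SQ.proj_smul]; exact h.smul c

end Generation

/-! ### Block permutations and sorted families -/

section BlockPerms

variable {k r : ℕ}

lemma le_blockOff (ℓ0 : ℕ) (c : Fin r → ℕ) (i : Fin r) : ℓ0 ≤ blockOff ℓ0 c i :=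
  Nat.le_add_right _ _

lemma blockOff_add_eq (ℓ0 : ℕ) (c : Fin r → ℕ) (i : Fin r) :
    blockOff ℓ0 c i + c i = ℓ0 + ∑ j ∈ Finset.univ.filter (fun j => j ≤ i), c j := by
  have : Finset.univ.filter (fun j => j ≤ i) =
      insert i (Finset.univ.filter fun j : Fin r => j < i) := by
    ext j
    simp [le_iff_eq_or_lt]
  rw [this, Finset.sum_insert (by simp), blockOff]
  ring

lemma blockOff_add_le (ℓ0 : ℕ) (c : Fin r → ℕ) (i : Fin r) :
    blockOff ℓ0 c i + c i ≤ ℓ0 + ∑ j, c j := by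
  rw [blockOff_add_eq]
  exact Nat.add_le_add_left (Finset.sum_le_sum_of_subset (Finset.subset_univ _)) _

lemma blockOff_add_le_of_lt (ℓ0 : ℕ) (c : Fin r → ℕ) {i j : Fin r} (h : i < j) :
    blockOff ℓ0 c i + c i ≤ blockOff ℓ0 c j := by
  rw [blockOff_add_eq]
  refine Nat.add_le_add_left (Finset.sum_le_sum_of_subset fun l hl => ?_) _
  simp only [Finset.mem_filter, Finset.mem_univ, true_and] at hl ⊢
  exact lt_of_le_of_lt hl h

/-- The family of blocks cut out by the permutation `σ`, without the initial block of length
`ℓ0`. -/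
def blockFam (ℓ0 : ℕ) (c : Fin r → ℕ) (σ : Equiv.Perm (Fin k)) (i : Fin r) : Finset (Fin k) :=
  blk σ (blockOff ℓ0 c i) (c i)

lemma blockFam_disjoint (ℓ0 : ℕ) (c : Fin r → ℕ) (σ : Equiv.Perm (Fin k)) (i j : Fin r)
    (hij : i ≠ j) : Disjoint (blockFam ℓ0 c σ i) (blockFam ℓ0 c σ j) := by
  rw [Finset.disjoint_left]
  intro x hi hj
  simp only [blockFam, blk, Finset.mem_filter, Finset.mem_univ, true_and] at hi hj
  rcases lt_or_gt_of_ne hij with h | h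
  · have := blockOff_add_le_of_lt ℓ0 c h
    omega
  · have := blockOff_add_le_of_lt ℓ0 c h
    omega

lemma card_blockFam {ℓ0 : ℕ} {c : Fin r → ℕ} (hk : ℓ0 + ∑ i, c i = k) (σ : Equiv.Perm (Fin k))
    (i : Fin r) : (blockFam ℓ0 c σ i).card = c i :=
  card_blk σ _ _ (hk ▸ blockOff_add_le ℓ0 c i)

lemma sdiff_blockFam {ℓ0 : ℕ} {c : Fin r → ℕ} (hk : ℓ0 + ∑ i, c i = k)
    (σ : Equiv.Perm (Fin k)) :
    Finset.univ \ Finset.univ.biUnion (blockFam ℓ0 c σ) = blk σ 0 ℓ0 := by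
  symm
  refine Finset.eq_of_subset_of_card_le ?_ ?_
  · intro x hx
    simp only [blk, Finset.mem_filter, Finset.mem_univ, true_and, Finset.mem_sdiff,
      Finset.mem_biUnion, not_exists, blockFam] at hx ⊢
    intro i
    have := le_blockOff ℓ0 c i
    omega
  · rw [card_blk σ 0 ℓ0 (by omega), Finset.card_sdiff_of_subset (Finset.subset_univ _),
      Finset.card_biUnion fun i _ j _ hij => blockFam_disjoint ℓ0 c σ i j hij]
    simp only [card_blockFam hk, Finset.card_univ, Fintype.card_fin]
    omega

open Classical in
/-- The label of an entry with respect to a family of disjoint blocks: `i + 1` on the block `B i`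
and `0` outside of all blocks. -/
def famLabel (B : Fin r → Finset (Fin k)) (x : Fin k) : Fin (r + 1) :=
  if h : ∃ i, x ∈ B i then h.choose.succ else 0

lemma famLabel_eq_succ {B : Fin r → Finset (Fin k)}
    (hB : ∀ i j, i ≠ j → Disjoint (B i) (B j)) (x : Fin k) (i : Fin r) :
    famLabel B x = i.succ ↔ x ∈ B i := by
  unfold famLabel
  split_ifs with h
  · rw [Fin.succ_inj]
    constructor
    · rintro rfl
      exact h.choose_spec
    · intro hx
      by_contra hne
      exact Finset.disjoint_left.mp (hB _ _ hne) h.choose_spec hx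
  · exact ⟨fun e => absurd e.symm (Fin.succ_ne_zero i), fun hx => absurd ⟨i, hx⟩ h⟩

lemma famLabel_eq_zero (B : Fin r → Finset (Fin k)) (x : Fin k) :
    famLabel B x = 0 ↔ x ∈ Finset.univ \ Finset.univ.biUnion B := by
  unfold famLabel
  split_ifs with h
  · simpa [Fin.succ_ne_zero] using h
  · simpa using h

/-- The Koszul sign of the permutation listing first the entries outside of the blocks and then the
blocks one after the other. -/
lemma koszulSign_famLabel (K : Type*) [Field K] (d : Fin k → ℤ) (B : Fin r → Finset (Fin k))
    (hB : ∀ i j, i ≠ j → Disjoint (B i) (B j)) :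
    koszulSign K d (Tuple.sort (famLabel B)) =
      crossSign K d (Finset.univ \ Finset.univ.biUnion B) (Finset.univ.biUnion B) *
        ∏ a, ∏ b, if a < b then crossSign K d (B a) (B b) else 1 := by
  rw [koszulSign_eq_of_labels K d _ (famLabel B ∘ Tuple.sort (famLabel B))
    (Tuple.monotone_sort _) (fun a b hab h => sort_tie _ a b hab h)]
  simp only [Function.comp, Equiv.apply_symm_apply]
  have h0 : Finset.univ.filter (fun x => famLabel B x = 0) =
      Finset.univ \ Finset.univ.biUnion B := by
    ext x
    simp only [Finset.mem_filter, Finset.mem_univ, true_and, famLabel_eq_zero]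
  have h1 : ∀ i : Fin r, Finset.univ.filter (fun x => famLabel B x = i.succ) = B i := by
    intro i
    ext x
    simp only [Finset.mem_filter, Finset.mem_univ, true_and, famLabel_eq_succ hB]
  rw [prod_labels_eq K d (famLabel B), crossSign_biUnion_right K d _ hB]
  simp only [Fin.prod_univ_succ (n := r), h0, h1, Fin.succ_lt_succ_iff, Fin.succ_pos, if_true,
    Fin.not_lt_zero, if_false, one_mul]

lemma famSign_eq (K : Type*) [Field K] (d : Fin k → ℤ) (B : Fin r → Finset (Fin k))
    (hB : ∀ i j, i ≠ j → Disjoint (B i) (B j)) (t : ℤ) :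
    ksign K (t * degOn d (Finset.univ \ Finset.univ.biUnion B)) *
        koszulSign K d (Tuple.sort (famLabel B)) *
        ksign K (((∑ i, degOn d (B i)) + t) * degOn d (Finset.univ \ Finset.univ.biUnion B)) =
      famSign K d B (Finset.univ \ Finset.univ.biUnion B) := by
  rw [koszulSign_famLabel K d B hB, famSign, ← crossSign_biUnion_left K d B hB,
    crossSign_swap K d Finset.sdiff_disjoint, add_mul, ksign_add, ← degOn_biUnion d B hB,
    mul_comm (degOn d (Finset.univ.biUnion B))]
  linear_combination
    (crossSign K d (Finset.univ \ Finset.univ.biUnion B) (Finset.univ.biUnion B) *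
      (∏ a, ∏ b, if a < b then crossSign K d (B a) (B b) else 1) *
      ksign K (degOn d (Finset.univ \ Finset.univ.biUnion B) *
        degOn d (Finset.univ.biUnion B))) *
    ksign_mul_self K (t * degOn d (Finset.univ \ Finset.univ.biUnion B))

lemma mem_Tset {ℓ0 : ℕ} {c : Fin r → ℕ} (hk : ℓ0 + ∑ i, c i = k) {σ : Equiv.Perm (Fin k)} :
    σ ∈ Tset k ℓ0 c ↔ StrictMono (blkFun σ 0 ℓ0 (by omega)) ∧
      (∀ i, StrictMono (blkFun σ (blockOff ℓ0 c i) (c i) (hk ▸ blockOff_add_le ℓ0 c i))) ∧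
      ∀ i j : Fin r, i < j → c i = c j →
        pidx σ (blockOff ℓ0 c i) < pidx σ (blockOff ℓ0 c j) := by
  have hle : ∀ i, blockOff ℓ0 c i + c i ≤ k := fun i => hk ▸ blockOff_add_le ℓ0 c i
  simp only [Tset, Finset.mem_filter, Finset.mem_univ, true_and]
  refine and_congr ?_ (and_congr (forall_congr' fun i => ?_) Iff.rfl)
  · constructor
    · intro h u v huv
      have huv' : (u : ℕ) < v := huv
      have hv := v.isLt
      have := h ⟨u, by omega⟩ ⟨v, by omega⟩ huv hv
      rw [pidx_of_lt σ (show (u : ℕ) < k by omega), pidx_of_lt σ (show (v : ℕ) < k by omega)]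
        at this
      simpa [blkFun] using this
    · intro h a b hab hb
      have := @h ⟨a, by omega⟩ ⟨b, hb⟩ hab
      rw [pidx_of_lt σ a.isLt, pidx_of_lt σ b.isLt]
      simpa [blkFun] using this
  · have hi := hle i
    constructor
    · intro h u v huv
      have huv' : (u : ℕ) < v := huv
      have hv := v.isLt
      have := h ⟨u, by omega⟩ ⟨v, by omega⟩ huv hv
      rw [pidx_of_lt σ (show blockOff ℓ0 c i + (u : ℕ) < k by omega),
        pidx_of_lt σ (show blockOff ℓ0 c i + (v : ℕ) < k by omega)] at this
      exact this
    · intro h a b hab hb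
      have := @h ⟨a, by omega⟩ ⟨b, hb⟩ hab
      rw [pidx_of_lt σ (show blockOff ℓ0 c i + (a : ℕ) < k by omega),
        pidx_of_lt σ (show blockOff ℓ0 c i + (b : ℕ) < k by omega)]
      exact this

lemma firstVal_blk (σ : Equiv.Perm (Fin k)) (off len : ℕ) (h : off + len ≤ k)
    (hinc : StrictMono (blkFun σ off len h)) (hlen : 0 < len) :
    firstVal (blk σ off len) = pidx σ off := by
  have hmem : σ ⟨off, by omega⟩ ∈ blk σ off len := by
    simp [blk, hlen]
  have hne : (blk σ off len).Nonempty := ⟨_, hmem⟩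
  rw [firstVal, dif_pos hne, pidx_of_lt σ (by omega : off < k)]
  congr 1
  refine le_antisymm (Finset.min'_le _ _ hmem) (Finset.le_min' _ _ _ fun y hy => ?_)
  rw [← image_blkFun σ off len h] at hy
  obtain ⟨u, _, rfl⟩ := Finset.mem_image.mp hy
  exact hinc.monotone (show (⟨0, hlen⟩ : Fin len) ≤ u from Nat.zero_le _)

lemma blockKey_lt_iff (B C : Finset (Fin k)) :
    blockKey B < blockKey C ↔ B.card < C.card ∨ (B.card = C.card ∧ firstVal B < firstVal C) := by
  simp [blockKey, Prod.Lex.toLex_lt_toLex]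

/-- A permutation in `Tset` is recovered from its family of blocks. -/
lemma sort_famLabel_blockFam {ℓ0 : ℕ} {c : Fin r → ℕ} (hk : ℓ0 + ∑ i, c i = k)
    {σ : Equiv.Perm (Fin k)} (hσ : σ ∈ Tset k ℓ0 c) :
    σ = Tuple.sort (famLabel (blockFam ℓ0 c σ)) := by
  have hd := blockFam_disjoint ℓ0 c σ
  obtain ⟨h1, h2, -⟩ := (mem_Tset hk).mp hσ
  have hz : ∀ m, famLabel (blockFam ℓ0 c σ) (σ m) = 0 ↔ (m : ℕ) < ℓ0 := by
    intro m
    rw [famLabel_eq_zero, sdiff_blockFam hk]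
    simp [blk]
  have hs : ∀ m i, famLabel (blockFam ℓ0 c σ) (σ m) = Fin.succ i ↔
      blockOff ℓ0 c i ≤ m ∧ (m : ℕ) < blockOff ℓ0 c i + c i := by
    intro m i
    rw [famLabel_eq_succ hd]
    simp [blockFam, blk]
  refine Tuple.eq_sort_iff.mpr ⟨?_, ?_⟩
  · intro a b hab
    have hab' : (a : ℕ) ≤ b := hab
    simp only [Function.comp]
    rcases Fin.eq_zero_or_eq_succ (famLabel (blockFam ℓ0 c σ) (σ a)) with ha | ⟨i, ha⟩
    · rw [ha]; exact Fin.zero_le _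
    rcases Fin.eq_zero_or_eq_succ (famLabel (blockFam ℓ0 c σ) (σ b)) with hb | ⟨j, hb⟩
    · exact absurd ((hz a).mpr (lt_of_le_of_lt hab' ((hz b).mp hb)))
        (by rw [ha]; exact Fin.succ_ne_zero i)
    · rw [ha, hb, Fin.succ_le_succ_iff]
      by_contra hij
      have h3 := blockOff_add_le_of_lt ℓ0 c (not_le.mp hij)
      have h4 := (hs a i).mp ha
      have h5 := (hs b j).mp hb
      omega
  · intro a b hab he
    have hab' : (a : ℕ) < b := hab
    rcases Fin.eq_zero_or_eq_succ (famLabel (blockFam ℓ0 c σ) (σ a)) with ha | ⟨i, ha⟩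
    · have hb := (hz b).mp (he ▸ ha)
      have := @h1 ⟨a, by omega⟩ ⟨b, hb⟩ hab
      simpa [blkFun] using this
    · have hb := (hs b i).mp (he ▸ ha)
      have ha := (hs a i).mp ha
      have := @h2 i ⟨a - blockOff ℓ0 c i, by omega⟩ ⟨b - blockOff ℓ0 c i, by omega⟩
        (Fin.mk_lt_mk.mpr (by omega))
      have e : ∀ (m : Fin k) (hm : blockOff ℓ0 c i ≤ m)
          (h : blockOff ℓ0 c i + ((m : ℕ) - blockOff ℓ0 c i) < k),
          (⟨blockOff ℓ0 c i + ((m : ℕ) - blockOff ℓ0 c i), h⟩ : Fin k) = m := by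
        intro m hm h
        ext
        simp only
        omega
      simp only [blkFun] at this
      rwa [e a ha.1, e b hb.1] at this

lemma goodFam_blockFam {ℓ0 : ℕ} {c : Fin r → ℕ} (hk : ℓ0 + ∑ i, c i = k)
    (hmono : ∀ i j, i ≤ j → c i ≤ c j) (hpos : ∀ i, 0 < c i)
    {σ : Equiv.Perm (Fin k)} (hσ : σ ∈ Tset k ℓ0 c) :
    GoodFam (blockFam ℓ0 c σ) Finset.univ where
  nonempty i := Finset.card_pos.mp ((card_blockFam hk σ i).symm ▸ hpos i)
  subset _ := Finset.subset_univ _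
  disjoint := blockFam_disjoint ℓ0 c σ
  sorted := by
    obtain ⟨-, h2, h3⟩ := (mem_Tset hk).mp hσ
    intro i j hij
    dsimp only
    rw [blockKey_lt_iff, card_blockFam hk, card_blockFam hk]
    rcases (hmono i j hij.le).lt_or_eq with h | h
    · exact Or.inl h
    · refine Or.inr ⟨h, ?_⟩
      unfold blockFam
      rw [firstVal_blk σ _ _ _ (h2 i) (hpos i), firstVal_blk σ _ _ _ (h2 j) (hpos j)]
      exact h3 i j hij h

/-- Sorting by labels turns a family of disjoint blocks into blocks of consecutive positions. -/
lemma blockFam_sort {ℓ0 : ℕ} {B : Fin r → Finset (Fin k)}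
    (hB : ∀ i j, i ≠ j → Disjoint (B i) (B j)) (hk : ℓ0 + ∑ i, (B i).card = k) :
    blockFam ℓ0 (fun i => (B i).card) (Tuple.sort (famLabel B)) = B := by
  -- The number of entries with label at most `m`.
  have hcount : ∀ m : ℕ, (Finset.univ.filter fun x => (famLabel B x : ℕ) < m + 1).card =
      ℓ0 + ∑ j ∈ Finset.univ.filter (fun j : Fin r => (j : ℕ) < m), (B j).card := by
    intro m
    have hset : (Finset.univ.filter fun x => (famLabel B x : ℕ) < m + 1) =
        (Finset.univ \ Finset.univ.biUnion B) ∪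
          (Finset.univ.filter fun j : Fin r => (j : ℕ) < m).biUnion B := by
      ext x
      simp only [Finset.mem_filter, Finset.mem_univ, true_and, Finset.mem_union,
        ← famLabel_eq_zero, Finset.mem_biUnion, ← famLabel_eq_succ hB]
      rcases Fin.eq_zero_or_eq_succ (famLabel B x) with h | ⟨i, h⟩
      · simp [h]
      · rw [h]
        simp only [Fin.val_succ, Nat.add_lt_add_iff_right, Fin.succ_ne_zero, false_or,
          Fin.succ_inj, exists_eq_right']
    have hdj : Disjoint (Finset.univ \ Finset.univ.biUnion B)
        ((Finset.univ.filter fun j : Fin r => (j : ℕ) < m).biUnion B) :=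
      Finset.sdiff_disjoint.mono_right
        (Finset.biUnion_subset_biUnion_of_subset_left B (Finset.filter_subset _ _))
    rw [hset, Finset.card_union_of_disjoint hdj,
      Finset.card_biUnion fun i _ j _ hij => hB i j hij,
      Finset.card_sdiff_of_subset (Finset.subset_univ _),
      Finset.card_biUnion fun i _ j _ hij => hB i j hij, Finset.card_univ, Fintype.card_fin]
    omega
  have hsort : Tuple.sort (fun x => (famLabel B x : ℕ)) = Tuple.sort (famLabel B) := by
    refine (Tuple.eq_sort_iff.mpr ⟨?_, ?_⟩).symm
    · intro a b hab
      exact Tuple.monotone_sort (famLabel B) hab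
    · intro a b hab h
      exact sort_tie _ a b hab (Fin.ext h)
  have hpos := sort_lt_iff fun x => (famLabel B x : ℕ)
  rw [hsort] at hpos
  funext i
  ext x
  have e1 : blockOff ℓ0 (fun i => (B i).card) i =
      (Finset.univ.filter fun x => (famLabel B x : ℕ) < i + 1).card := by
    rw [hcount]
    rfl
  have e2 : blockOff ℓ0 (fun i => (B i).card) i + (B i).card =
      (Finset.univ.filter fun x => (famLabel B x : ℕ) < i + 1 + 1).card := by
    rw [hcount, blockOff_add_eq ℓ0 (fun i => (B i).card) i]
    simp only [Nat.lt_succ_iff, Fin.val_fin_le]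
  simp only [blockFam, blk, Finset.mem_filter, Finset.mem_univ, true_and]
  rw [e2, ← hpos, e1, ← not_lt, ← hpos, ← famLabel_eq_succ hB, Fin.ext_iff, Fin.val_succ]
  omega

lemma sort_famLabel_mem_Tset {ℓ0 : ℕ} {B : Fin r → Finset (Fin k)} (hB : GoodFam B Finset.univ)
    (hk : ℓ0 + ∑ i, (B i).card = k) :
    Tuple.sort (famLabel B) ∈ Tset k ℓ0 fun i => (B i).card := by
  have hfam := blockFam_sort hB.disjoint hk
  have hle : ∀ i, blockOff ℓ0 (fun i => (B i).card) i + (B i).card ≤ k :=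
    fun i => (blockOff_add_le ℓ0 (fun i => (B i).card) i).trans hk.le
  have h2 : ∀ i, StrictMono (blkFun (Tuple.sort (famLabel B))
      (blockOff ℓ0 (fun i => (B i).card) i) (B i).card (hle i)) := by
    intro i u v huv
    have hmem : ∀ w, famLabel B (blkFun (Tuple.sort (famLabel B))
        (blockOff ℓ0 (fun i => (B i).card) i) (B i).card (hle i) w) = i.succ := by
      intro w
      rw [famLabel_eq_succ hB.disjoint]
      have := Finset.mem_image_of_mem (blkFun (Tuple.sort (famLabel B))
        (blockOff ℓ0 (fun i => (B i).card) i) (B i).card (hle i)) (Finset.mem_univ w)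
      rw [image_blkFun] at this
      exact (congrFun hfam i).subset this
    exact sort_tie _ _ _ (Fin.mk_lt_mk.mpr (Nat.add_lt_add_left huv _))
      ((hmem u).trans (hmem v).symm)
  refine (mem_Tset hk).mpr ⟨?_, h2, ?_⟩
  · intro u v huv
    have hmem : ∀ w, famLabel B (blkFun (Tuple.sort (famLabel B)) 0 ℓ0 (by omega) w) = 0 := by
      intro w
      have := Finset.mem_image_of_mem (blkFun (Tuple.sort (famLabel B)) 0 ℓ0 (by omega))
        (Finset.mem_univ w)
      rw [image_blkFun, ← sdiff_blockFam hk, hfam] at this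
      exact (famLabel_eq_zero B _).mpr this
    exact sort_tie _ _ _ (Fin.mk_lt_mk.mpr (Nat.add_lt_add_left huv _))
      ((hmem u).trans (hmem v).symm)
  · intro i j hij hc
    have h := (blockKey_lt_iff _ _).mp (hB.sorted hij)
    have hlt : firstVal (B i) < firstVal (B j) := by
      rcases h with h | h
      · exact absurd hc h.ne
      · exact h.2
    have hf : ∀ i, firstVal (B i) = pidx (Tuple.sort (famLabel B))
        (blockOff ℓ0 (fun i => (B i).card) i) := by
      intro i
      rw [← firstVal_blk _ _ _ (hle i) (h2 i) (Finset.card_pos.mpr (hB.nonempty i))]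
      exact congrArg firstVal (congrFun hfam i).symm
    rw [← hf, ← hf]
    exact hlt

/-- The block permutations with block lengths `ℓ1 ≤ ⋯ ≤ ℓr` correspond to the sorted families of
`r` blocks. -/
lemma sum_blockPerms {X : Type*} [AddCommMonoid X] (H : (Fin r → Finset (Fin k)) → X) :
    ∑ ℓ0 ∈ Finset.range (k + 1),
      ∑ c ∈ (Fintype.piFinset fun _ : Fin r => Finset.range (k + 1)).filter
        (fun c => ℓ0 + (∑ i, c i) = k ∧ (∀ i j : Fin r, i ≤ j → c i ≤ c j) ∧ ∀ i, 0 < c i),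
      ∑ σ ∈ Tset k ℓ0 c, H (blockFam ℓ0 c σ) =
    ∑ B ∈ goodFams r Finset.univ, H B := by
  have hcard : ∀ B : Fin r → Finset (Fin k), GoodFam B Finset.univ →
      (k - ∑ i, (B i).card) + ∑ i, (B i).card = k := by
    intro B hB
    have h := Finset.card_le_univ (Finset.univ.biUnion B)
    rw [Finset.card_biUnion fun i _ j _ hij => hB.disjoint i j hij, Fintype.card_fin] at h
    omega
  rw [Finset.sum_sigma', Finset.sum_sigma']
  refine Finset.sum_bij' (fun z _ => blockFam z.1.1 z.1.2 z.2)
    (fun B _ => ⟨⟨k - ∑ i, (B i).card, fun i => (B i).card⟩, Tuple.sort (famLabel B)⟩)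
    ?_ ?_ ?_ ?_ (fun _ _ => rfl)
  · rintro ⟨⟨ℓ0, c⟩, σ⟩ hz
    simp only [Finset.mem_sigma, Finset.mem_filter] at hz
    exact mem_goodFams.mpr (goodFam_blockFam hz.1.2.2.1 hz.1.2.2.2.1 hz.1.2.2.2.2 hz.2)
  · intro B hB
    rw [mem_goodFams] at hB
    have hc := hcard B hB
    simp only [Finset.mem_sigma, Finset.mem_filter, Finset.mem_range, Fintype.mem_piFinset]
    refine ⟨⟨by omega, fun i => ?_, hc, fun i j hij => ?_, fun i =>
      Finset.card_pos.mpr (hB.nonempty i)⟩, sort_famLabel_mem_Tset hB hc⟩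
    · have := Finset.card_le_univ (B i)
      rw [Fintype.card_fin] at this
      omega
    · rcases hij.eq_or_lt with rfl | h
      · exact le_rfl
      · rcases (blockKey_lt_iff _ _).mp (hB.sorted h) with h | h
        · exact h.le
        · exact h.1.le
  · rintro ⟨⟨ℓ0, c⟩, σ⟩ hz
    simp only [Finset.mem_sigma, Finset.mem_filter] at hz
    have hk := hz.1.2.2.1
    have e1 : k - ∑ i, c i = ℓ0 := by omega
    have e2 : (fun i => (blockFam ℓ0 c σ i).card) = c := funext fun i => card_blockFam hk σ i
    simp only [e2, ← sort_famLabel_blockFam hk hz.2, e1]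
  · intro B hB
    rw [mem_goodFams] at hB
    exact blockFam_sort hB.disjoint (hcard B hB)

end BlockPerms

/-- For a degree 0 morphism of graded unital algebras
`ψ : Sym_A(Q,A) → Sym_A(P,A)` with `p ∘ ψ = p`, with associated maps `φ_k` and `Φ_k`, the
`Sym_A^k(P,A)`-component of `ψ(ω)`, `ω ∈ Sym_A^r(Q,A)`, is given by
`ψ(ω)_k(p_1,…,p_k) = ∑_{ℓ0+⋯+ℓr=k, ℓ1≤⋯≤ℓr} ∑_{σ∈T_{ℓ0|ℓ1,…,ℓr}} (-1)^{ω(p_{σ(1)}+⋯+p_{σ(ℓ0)})}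
α(σ,p) φ_{ℓ0}(p_{σ(1)},…,p_{σ(ℓ0)} | ω(Φ_{1,σ}(p),…,Φ_{r,σ}(p)))`. -/
theorem psi_component_formula
    (K : Type*) [Field K] [CharZero K] (A : Type*) [Ring A] [Algebra K A]
    (P : Type*) [AddCommGroup P] [Module K P] [Module A P] [IsScalarTower K A P]
    [Module.Projective A P] [Module.Finite A P]
    (Q : Type*) [AddCommGroup Q] [Module K Q] [Module A Q] [IsScalarTower K A Q]
    [Module.Projective A Q] [Module.Finite A Q]
    (degA : ℤ → Submodule K A) (degP : ℤ → Submodule K P) (degQ : ℤ → Submodule K Q)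
    (hA : IsGCAlg K A degA)
    (SP : SymModel K A P degA degP) (SQ : SymModel K A Q degA degQ)
    (ψ : SQ.𝒜 →ₐ[K] SP.𝒜)
    (hψdeg : ∀ {r : ℕ} {s : ℤ} {x : SQ.𝒜}, x ∈ SQ.comp r s → ∀ (r' : ℕ) (s' : ℤ),
      SP.proj r' s' (ψ x) ≠ 0 → (r' : ℤ) + s' = (r : ℤ) + s)
    (hψp : ∀ x : SQ.𝒜, SP.ev 0 (ψ x) Fin.elim0 = SQ.ev 0 x Fin.elim0)
    (Φ : ∀ k : ℕ, (Fin k → P) → Q) (hΦ : PhiDetermined SQ SP ψ Φ) :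
    ∀ (r : ℕ) (s : ℤ) (ω : SQ.𝒜), ω ∈ SQ.comp r s →
    ∀ (k : ℕ) (dp : Fin k → ℤ) (p : Fin k → P), (∀ i, p i ∈ degP (dp i)) →
      SP.ev k (SP.proj k ((r : ℤ) + s - k) (ψ ω)) p =
        ∑ ℓ0 ∈ Finset.range (k + 1),
          ∑ c ∈ (Fintype.piFinset fun _ : Fin r => Finset.range (k+1)).filter
            (fun c => ℓ0 + (∑ i, c i) = k ∧ (∀ i j : Fin r, i ≤ j → c i ≤ c j) ∧ ∀ i, 0 < c i),
          ∑ σ ∈ Tset k ℓ0 c,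
            (ksign K (((r : ℤ) + s) * ∑ u ∈ Finset.range ℓ0, fget dp (pidx σ u)) *
              koszulSign K dp σ) •
            phiMap SQ SP ψ ℓ0
              ((((∑ i, dp i) - ∑ u ∈ Finset.range ℓ0, fget dp (pidx σ u)) + ((r : ℤ) + s)))
              (SQ.ev r ω (fun i : Fin r =>
                Φ (c i) (fun u : Fin (c i) => fget p (pidx σ (blockOff ℓ0 c i + (u : ℕ))))))
              (∑ u ∈ Finset.range ℓ0, fget dp (pidx σ u))
              (fun u : Fin ℓ0 => fget p (pidx σ (u : ℕ))) := by
  intro r s ω hω k dp p hp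
  have hψ : PsiDegZero SQ SP ψ := fun r s x hx r' s' h => hψdeg hx r' s' h
  have hL : SP.ev k (SP.proj k ((r : ℤ) + s - k) (ψ ω)) p = evOn SP (ψ ω) p Finset.univ :=
    ((hψ r s ω hω).ev_proj k p).trans (onSet_univ (fun n => SP.ev n (ψ ω)) p).symm
  rw [hL, psiFormula_of_mem hψ hψp hΦ hA.one_mem hp hω Finset.univ, ← sum_blockPerms]
  refine Finset.sum_congr rfl fun ℓ0 _ => Finset.sum_congr rfl fun c hc =>
    Finset.sum_congr rfl fun σ hσ => ?_
  have hk := (Finset.mem_filter.mp hc).2.1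
  obtain ⟨h1, h2, -⟩ := (mem_Tset hk).mp hσ
  have hd := blockFam_disjoint ℓ0 c σ
  have hS := sdiff_blockFam hk σ
  have hD0 := sum_blk dp σ 0 ℓ0 (by omega)
  simp only [zero_add] at hD0
  have hQ : ∀ i : Fin r, Φ (c i)
      (fun u : Fin (c i) => fget p (pidx σ (blockOff ℓ0 c i + (u : ℕ)))) =
      onSet Φ p (blockFam ℓ0 c σ i) := fun i => onSet_blk Φ p σ _ _ _ (h2 i)
  have hDsum : (∑ i, dp i) - degOn dp (blk σ 0 ℓ0) = ∑ i, degOn dp (blockFam ℓ0 c σ i) := by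
    rw [← degOn_biUnion dp _ hd, ← hS, sub_eq_iff_eq_add, ← degOn_union dp
      Finset.disjoint_sdiff, Finset.union_sdiff_of_subset (Finset.subset_univ _), degOn]
  have hsgn := famSign_eq K dp (blockFam ℓ0 c σ) hd ((r : ℤ) + s)
  rw [← sort_famLabel_blockFam hk hσ, hS] at hsgn
  have hval := onSet_blk (fun n => SP.ev n (ψ (SQ.incA (SQ.ev r ω
    fun i => onSet Φ p (blockFam ℓ0 c σ i))))) p σ 0 ℓ0 (by omega) h1
  simp only [zero_add] at hval
  simp only [phiMap, hQ, hD0, hDsum]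
  rw [(homTot_psi_ev_Phi hψ hΦ hp hω (blockFam ℓ0 c σ)).ev_proj, smul_smul, hsgn, hS, hval]
  rfl
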